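/- arXiv:2001.11952 — 2 statements merged into one kernel-verified Lean document; each statement's English description precedes it below -/
import Mathlib

section
/- Let κ, A, B, τ, L > 0 and set d* = κL²/π². Consider the one-dimensional logistic steady-state system: −d u″(x) = κ u(x)(1 − A u(x) − B v(x)) and −d v″(x) = (1/τ)(u(x) − v(x)) for x ∈ (0, L), with u(0) = u(L) = v(0) = v(L) = 0. Then: (i) any nonnegative classical solution satisfies 0 ≤ u(x) ≤ 1/A and 0 ≤ v(x) ≤ 1/A on (0, L); (ii) for each d with 0 < d < d* there is exactly one positive classical solution; (iii) for d ≥ d* there is no positive classical solution. -/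
open Set Real

/-- A nonnegative classical solution of the 1D logistic steady state system:
−d u″ = κu(1 − Au − Bv), −d v″ = (1/τ)(u − v) on (0, L) with zero Dirichlet data. -/
def IsNonnegLogSol (L d τ κ A B : ℝ) (u v : ℝ → ℝ) : Prop :=
  ContDiffOn ℝ 2 u (Icc 0 L) ∧ ContDiffOn ℝ 2 v (Icc 0 L) ∧
  (∀ x ∈ Ioo 0 L, 0 ≤ u x) ∧ (∀ x ∈ Ioo 0 L, 0 ≤ v x) ∧
  (∀ x ∈ Ioo 0 L, -(d * deriv (deriv u) x) = κ * u x * (1 - A * u x - B * v x)) ∧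
  (∀ x ∈ Ioo 0 L, -(d * deriv (deriv v) x) = (1 / τ) * (u x - v x)) ∧
  u 0 = 0 ∧ u L = 0 ∧ v 0 = 0 ∧ v L = 0

/-- A positive classical solution of the 1D logistic steady state system. -/
def IsPosLogSol (L d τ κ A B : ℝ) (u v : ℝ → ℝ) : Prop :=
  IsNonnegLogSol L d τ κ A B u v ∧
  (∀ x ∈ Ioo 0 L, 0 < u x) ∧ (∀ x ∈ Ioo 0 L, 0 < v x)

open Filter Topology

/-
The a priori bounds come from the maximum principle, and nonexistence from Sturm comparison with
the first Dirichlet eigenfunction.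

The linearization at a positive state and the equation for the difference of two positive states
are both linear predator-prey systems `-w″ + p w = -c z`, `-z″ + q z = e w` with `c, e ≥ 0`, in
which `u` and `v` are strict supersolutions for the two scalar operators. Such a system has only the
trivial solution: `w` takes a positive value on every interval between zeros where `z > 0`, and `z`
a negative one on every such interval where `w > 0`, so the curve `(w, z)` would turn around the
origin infinitely often, and the Cauchy data of `w` and `z` would vanish where the turns accumulate.
Hence positive states are unique and nondegenerate.

For existence, let the resource `m` in `-u″ = u (m - α u - β v)` depend on position. The resources
admitting a positive state form a set that is open, by the implicit function theorem, and closed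
relative to `{m > λ₁}`, by compactness of the Green operator. Multiples of the first eigenfunction
`s` solve the problem for `m = λ₁ + (M - λ₁) s`, and the segment from this `m` to the constant `M`
lies in `{m > λ₁}` apart from its initial point.
-/

namespace LogisticSteadyState

section SecondDerivative

variable {E F : Type*} [NormedAddCommGroup E] [NormedSpace ℝ E] [NormedAddCommGroup F]
  [NormedSpace ℝ F] {f g h k : ℝ → E} {s t : Set ℝ} {a b p x C : ℝ}

/-- `f` is twice differentiable on `s` with second derivative `g`, all derivatives being relative
to `s`. On `s = Icc a b` this makes the differential equation hold up to the end points, so that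
Cauchy data and second derivatives at the boundary need no separate treatment. -/
def HasSecondDerivOn (f g : ℝ → E) (s : Set ℝ) : Prop :=
  ∃ f' : ℝ → E, ∀ x ∈ s, HasDerivWithinAt f (f' x) s x ∧ HasDerivWithinAt f' (g x) s x

namespace HasSecondDerivOn

theorem mono (hf : HasSecondDerivOn f g t) (hst : s ⊆ t) : HasSecondDerivOn f g s :=
  hf.imp fun _ H x hx => ⟨(H x (hst hx)).1.mono hst, (H x (hst hx)).2.mono hst⟩

theorem congr (hf : HasSecondDerivOn f g s) (hfh : EqOn h f s) (hgk : EqOn k g s) :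
    HasSecondDerivOn h k s :=
  hf.imp fun _ H x hx => ⟨(H x hx).1.congr hfh (hfh hx), hgk hx ▸ (H x hx).2⟩

theorem const_smul (c : ℝ) (hf : HasSecondDerivOn f g s) :
    HasSecondDerivOn (fun x => c • f x) (fun x => c • g x) s := by
  obtain ⟨f', H⟩ := hf
  exact ⟨fun x => c • f' x, fun x hx => ⟨(H x hx).1.const_smul c, (H x hx).2.const_smul c⟩⟩

theorem neg (hf : HasSecondDerivOn f g s) : HasSecondDerivOn (-f) (-g) s := by
  obtain ⟨f', H⟩ := hf
  exact ⟨-f', fun x hx => ⟨(H x hx).1.neg, (H x hx).2.neg⟩⟩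

theorem sub (hf : HasSecondDerivOn f g s) (hh : HasSecondDerivOn h k s) :
    HasSecondDerivOn (fun x => f x - h x) (fun x => g x - k x) s := by
  obtain ⟨f', Hf⟩ := hf
  obtain ⟨h', Hh⟩ := hh
  exact ⟨fun x => f' x - h' x,
    fun x hx => ⟨(Hf x hx).1.sub (Hh x hx).1, (Hf x hx).2.sub (Hh x hx).2⟩⟩

theorem const_sub (c : E) (hf : HasSecondDerivOn f g s) :
    HasSecondDerivOn (fun x => c - f x) (fun x => -g x) s := by
  obtain ⟨f', H⟩ := hf
  exact ⟨fun x => -f' x, fun x hx => ⟨(H x hx).1.const_sub c, (H x hx).2.neg⟩⟩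

theorem prodMk {h k : ℝ → F} (hf : HasSecondDerivOn f g s) (hh : HasSecondDerivOn h k s) :
    HasSecondDerivOn (fun x => (f x, h x)) (fun x => (g x, k x)) s := by
  obtain ⟨f', Hf⟩ := hf
  obtain ⟨h', Hh⟩ := hh
  exact ⟨fun x => (f' x, h' x),
    fun x hx => ⟨(Hf x hx).1.prodMk (Hh x hx).1, (Hf x hx).2.prodMk (Hh x hx).2⟩⟩

theorem continuousOn (hf : HasSecondDerivOn f g s) : ContinuousOn f s :=
  fun x hx => (hf.choose_spec x hx).1.continuousWithinAt

theorem differentiableWithinAt (hf : HasSecondDerivOn f g s) (hx : x ∈ s) :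
    DifferentiableWithinAt ℝ f s x :=
  (hf.choose_spec x hx).1.differentiableWithinAt

theorem deriv_deriv (hf : HasSecondDerivOn f g s) (hx : s ∈ 𝓝 x) : deriv (deriv f) x = g x := by
  obtain ⟨f', H⟩ := hf
  have hderiv : deriv f =ᶠ[𝓝 x] f' := by
    filter_upwards [eventually_mem_nhds_iff.2 hx] with y hy
    exact ((H y (mem_of_mem_nhds hy)).1.hasDerivAt hy).deriv
  rw [hderiv.deriv_eq, ((H x (mem_of_mem_nhds hx)).2.hasDerivAt hx).deriv]

theorem of_contDiffOn (hab : a < b) (hf : ContDiffOn ℝ 2 f (Icc a b))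
    (hg : ContinuousOn g (Icc a b)) (hfg : ∀ x ∈ Ioo a b, deriv (deriv f) x = g x) :
    HasSecondDerivOn f g (Icc a b) := by
  set f' := derivWithin f (Icc a b)
  set f'' := derivWithin f' (Icc a b)
  have huniq := uniqueDiffOn_Icc hab
  have hf' : ContDiffOn ℝ 1 f' (Icc a b) := hf.derivWithin huniq (by norm_num)
  have hf'' : ContinuousOn f'' (Icc a b) := hf'.continuousOn_derivWithin huniq le_rfl
  have H : HasSecondDerivOn f f'' (Icc a b) := ⟨f', fun x hx =>
    ⟨(hf.differentiableOn two_ne_zero x hx).hasDerivWithinAt,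
      (hf'.differentiableOn one_ne_zero x hx).hasDerivWithinAt⟩⟩
  have heq : EqOn g f'' (Ioo a b) := fun x hx => by
    rw [← hfg x hx, H.deriv_deriv (Icc_mem_nhds hx.1 hx.2)]
  exact H.congr (eqOn_refl _ _)
    (heq.of_subset_closure hg hf'' Ioo_subset_Icc_self (closure_Ioo hab.ne).ge)

theorem contDiffOn (hab : a < b) (hf : HasSecondDerivOn f g (Icc a b))
    (hg : ContinuousOn g (Icc a b)) : ContDiffOn ℝ 2 f (Icc a b) := by
  obtain ⟨f', H⟩ := hf
  have huniq := uniqueDiffOn_Icc hab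
  have hf' : ContDiffOn ℝ 1 f' (Icc a b) := by
    rw [← zero_add 1, contDiffOn_succ_iff_derivWithin huniq]
    refine ⟨fun x hx => (H x hx).2.differentiableWithinAt, by simp, contDiffOn_zero.2 ?_⟩
    exact hg.congr fun x hx => (H x hx).2.derivWithin (huniq x hx)
  rw [← one_add_one_eq_two, contDiffOn_succ_iff_derivWithin huniq]
  refine ⟨fun x hx => (H x hx).1.differentiableWithinAt, by simp, ?_⟩
  exact hf'.congr fun x hx => (H x hx).1.derivWithin (huniq x hx)

end HasSecondDerivOn

theorem eq_zero_of_norm_deriv_le {f' : ℝ → E}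
    (hf : ∀ x ∈ Icc a b, HasDerivWithinAt f (f' x) (Icc a b) x)
    (hbound : ∀ x ∈ Icc a b, ‖f' x‖ ≤ C * ‖f x‖) (hp : p ∈ Icc a b) (hfp : f p = 0) :
    ∀ x ∈ Icc a b, f x = 0 := by
  have hright : ∀ x ∈ Icc p b, f x = 0 :=
    eq_zero_of_abs_deriv_le_mul_abs_self_of_eq_zero_right
      (fun x hx => (hf x ⟨hp.1.trans hx.1, hx.2⟩).continuousWithinAt.mono
        (Icc_subset_Icc_left hp.1))
      (fun x hx => (hf x ⟨hp.1.trans hx.1, hx.2.le⟩).mono_of_mem_nhdsWithin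
        (Icc_mem_nhdsGE_of_mem ⟨hp.1.trans hx.1, hx.2⟩))
      hfp fun x hx => hbound x ⟨hp.1.trans hx.1, hx.2.le⟩
  have hleft : ∀ x ∈ Icc a p, f x = 0 := by
    have hreflect : ∀ x ∈ Icc (-p) (-a),
        HasDerivWithinAt (fun y => f (-y)) (-f' (-x)) (Icc (-p) (-a)) x := fun x hx => by
      have hmaps : MapsTo Neg.neg (Icc (-p) (-a)) (Icc a b) := fun y hy =>
        ⟨le_neg_of_le_neg hy.2, (neg_le_of_neg_le hy.1).trans hp.2⟩
      simpa [Function.comp_def] using (hf (-x) (hmaps hx)).scomp x (hasDerivWithinAt_neg x _) hmaps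
    intro x hx
    have := eq_zero_of_abs_deriv_le_mul_abs_self_of_eq_zero_right (K := C)
      (fun y hy => (hreflect y hy).continuousWithinAt)
      (fun y hy => (hreflect y (Ico_subset_Icc_self hy)).mono_of_mem_nhdsWithin
        (Icc_mem_nhdsGE_of_mem hy)) (by simpa using hfp)
      (fun y hy => by
        rw [norm_neg]
        exact hbound (-y) ⟨le_neg_of_le_neg hy.2.le, (neg_le_of_neg_le hy.1).trans hp.2⟩)
      (-x) ⟨neg_le_neg hx.2, neg_le_neg hx.1⟩
    simpa using this
  exact fun x hx => (le_total x p).elim (fun h => hleft x ⟨hx.1, h⟩) fun h => hright x ⟨h, hx.2⟩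

theorem HasSecondDerivOn.eq_zero_of_norm_le (hab : a < b) (hf : HasSecondDerivOn f g (Icc a b))
    (hbound : ∀ x ∈ Icc a b, ‖g x‖ ≤ C * ‖f x‖) (hp : p ∈ Icc a b) (hfp : f p = 0)
    (hfp' : HasDerivWithinAt f 0 (Icc a b) p) : ∀ x ∈ Icc a b, f x = 0 := by
  obtain ⟨f', H⟩ := hf
  have hf'p : f' p = 0 := (uniqueDiffOn_Icc hab p hp).eq_deriv _ (H p hp).1 hfp'
  have hzero := eq_zero_of_norm_deriv_le (f := fun x => (f x, f' x)) (C := max 1 C)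
    (fun x hx => (H x hx).1.prodMk (H x hx).2) (fun x hx => ?_) hp (by simp [hfp, hf'p])
  · exact fun x hx => congrArg Prod.fst (hzero x hx)
  · refine max_le ?_ ((hbound x hx).trans ?_)
    · calc ‖f' x‖ ≤ ‖(f x, f' x)‖ := norm_snd_le (f x, f' x)
        _ ≤ max 1 C * ‖(f x, f' x)‖ := le_mul_of_one_le_left (norm_nonneg _) (le_max_left _ _)
    · gcongr
      · exact le_max_right _ _
      · exact norm_fst_le (f x, f' x)

end SecondDerivative

section Nodal

variable {f g φ ψ : ℝ → ℝ} {a b c d f' p x y C : ℝ}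

/-- `(c, d)` is a (positive) nodal interval of `f`: a bounded component of `{f > 0}`. -/
structure IsNodalInterval (f : ℝ → ℝ) (c d : ℝ) : Prop where
  lt : c < d
  left_eq : f c = 0
  right_eq : f d = 0
  pos : ∀ x ∈ Ioo c d, 0 < f x

namespace IsNodalInterval

theorem nonneg (h : IsNodalInterval f c d) : ∀ x ∈ Icc c d, 0 ≤ f x := by
  intro x hx
  obtain rfl | hcx := hx.1.eq_or_lt
  · exact h.left_eq.ge
  obtain rfl | hxd := hx.2.eq_or_lt
  · exact h.right_eq.ge
  exact (h.pos x ⟨hcx, hxd⟩).le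

theorem isMinOn (h : IsNodalInterval f c d) (hp : f p = 0) : IsMinOn f (Icc c d) p :=
  fun x hx => hp.trans_le (h.nonneg x hx)

end IsNodalInterval

theorem exists_last_zero (hay : a ≤ y) (hf : ContinuousOn f (Icc a y)) (ha : f a ≤ 0)
    (hy : 0 < f y) : ∃ c ∈ Ico a y, f c = 0 ∧ ∀ x ∈ Ioc c y, 0 < f x := by
  have hcompact : IsCompact (Icc a y ∩ f ⁻¹' Iic 0) :=
    isCompact_Icc.of_isClosed_subset (hf.preimage_isClosed_of_isClosed isClosed_Icc isClosed_Iic)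
      inter_subset_left
  obtain ⟨c, ⟨hc, hc0⟩, hmax⟩ := hcompact.exists_isGreatest ⟨a, left_mem_Icc.2 hay, ha⟩
  have hcy : c < y := hc.2.lt_of_ne fun h => hy.not_ge (h ▸ hc0)
  have hpos : ∀ x ∈ Ioc c y, 0 < f x := fun x hx =>
    not_le.1 fun h => hx.1.not_ge (hmax ⟨⟨hc.1.trans hx.1.le, hx.2⟩, h⟩)
  obtain ⟨t, ht, hft⟩ := intermediate_value_Icc hcy.le (hf.mono (Icc_subset_Icc_left hc.1))
    ⟨hc0, hy.le⟩
  obtain rfl | hct := ht.1.eq_or_lt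
  · exact ⟨c, ⟨hc.1, hcy⟩, hft, hpos⟩
  · exact absurd hft (hpos t ⟨hct, ht.2⟩).ne'

theorem exists_first_zero (hyb : y ≤ b) (hf : ContinuousOn f (Icc y b)) (hb : f b ≤ 0)
    (hy : 0 < f y) : ∃ d ∈ Ioc y b, f d = 0 ∧ ∀ x ∈ Ico y d, 0 < f x := by
  obtain ⟨c, hc, hc0, hpos⟩ := exists_last_zero (f := fun x => f (-x)) (neg_le_neg hyb)
    (hf.comp continuousOn_neg fun x hx => ⟨le_neg_of_le_neg hx.2, neg_le_of_neg_le hx.1⟩)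
    (by simpa using hb) (by simpa using hy)
  refine ⟨-c, ⟨lt_neg_of_lt_neg hc.2, neg_le_of_neg_le hc.1⟩, hc0, fun x hx => ?_⟩
  simpa using hpos (-x) ⟨lt_neg_of_lt_neg hx.2, neg_le_neg hx.1⟩

theorem exists_isNodalInterval (hf : ContinuousOn f (Icc a b)) (ha : f a ≤ 0) (hb : f b ≤ 0)
    (hy : y ∈ Icc a b) (hfy : 0 < f y) :
    ∃ c ∈ Ico a y, ∃ d ∈ Ioc y b, IsNodalInterval f c d := by
  obtain ⟨c, hc, hc0, hcpos⟩ := exists_last_zero hy.1 (hf.mono (Icc_subset_Icc_right hy.2)) ha hfy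
  obtain ⟨d, hd, hd0, hdpos⟩ := exists_first_zero hy.2 (hf.mono (Icc_subset_Icc_left hy.1)) hb hfy
  exact ⟨c, hc, d, hd, hc.2.trans hd.1, hc0, hd0, fun x hx =>
    (le_total x y).elim (fun h => hcpos x ⟨hx.1, h⟩) fun h => hdpos x ⟨h, hx.2⟩⟩

theorem exists_isNodalInterval_left (hab : a < b) (hf : ContinuousOn f (Icc a b)) (ha : f a = 0)
    (hb : f b ≤ 0) (hf' : HasDerivWithinAt f f' (Icc a b) a) (hpos : 0 < f') :
    ∃ d ≤ b, IsNodalInterval f a d := by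
  have hnear : ∀ᶠ x in 𝓝[>] a, 0 < f x := by
    have hslope := (hasDerivWithinAt_iff_tendsto_slope' (by simp)).1
      (hf'.mono_of_mem_nhdsWithin (Icc_mem_nhdsGT hab))
    filter_upwards [hslope.eventually (lt_mem_nhds hpos), self_mem_nhdsWithin] with x hx hax
    rw [slope_def_field, ha, sub_zero] at hx
    exact (div_pos_iff_of_pos_right (sub_pos.2 hax)).1 hx
  obtain ⟨e, hae, he⟩ := mem_nhdsGT_iff_exists_Ioc_subset.1 hnear
  have hay : a < min e b := lt_min hae hab
  obtain ⟨c, hc, d, hd, h⟩ := exists_isNodalInterval hf ha.le hb ⟨hay.le, min_le_right e b⟩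
    (he ⟨hay, min_le_left e b⟩)
  obtain rfl | hac := hc.1.eq_or_lt
  · exact ⟨d, hd.2, h⟩
  · exact absurd h.left_eq (he ⟨hac, hc.2.le.trans (min_le_left e b)⟩ : 0 < f c).ne'

theorem mul_deriv_nonneg_of_isMinOn (hf : HasDerivWithinAt f f' (Icc c d) p)
    (hmin : IsMinOn f (Icc c d) p) (hp : p ∈ Icc c d) (hx : x ∈ Icc c d) : 0 ≤ (x - p) * f' := by
  simpa using hmin.localize.hasFDerivWithinAt_nonneg hf.hasFDerivWithinAt
    (sub_mem_posTangentConeAt_of_segment_subset ((convex_Icc c d).segment_subset hp hx))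

/- Sturm comparison: otherwise the Wronskian of `φ` and `f` would increase strictly from a
nonnegative to a nonpositive value. -/
theorem IsNodalInterval.exists_mul_le_mul (h : IsNodalInterval f c d)
    (hf : HasSecondDerivOn f g (Icc c d)) (hφ : HasSecondDerivOn φ ψ (Icc c d))
    (hφ0 : ∀ x ∈ Icc c d, 0 ≤ φ x) : ∃ x ∈ Ioo c d, φ x * g x ≤ f x * ψ x := by
  by_contra! hlt
  obtain ⟨f', Hf⟩ := hf
  obtain ⟨φ', Hφ⟩ := hφ
  have hc := left_mem_Icc.2 h.lt.le
  have hd := right_mem_Icc.2 h.lt.le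
  let wronskian x := φ x * f' x - f x * φ' x
  have hderiv : ∀ x ∈ Icc c d,
      HasDerivWithinAt wronskian (φ x * g x - f x * ψ x) (Icc c d) x := fun x hx =>
    (((Hφ x hx).1.mul (Hf x hx).2).sub ((Hf x hx).1.mul (Hφ x hx).2)).congr_deriv (by ring)
  have hmono : StrictMonoOn wronskian (Icc c d) := by
    refine strictMonoOn_of_deriv_pos (convex_Icc c d)
      (fun x hx => (hderiv x hx).continuousWithinAt) fun x hx => ?_
    rw [interior_Icc] at hx
    rw [((hderiv x (Ioo_subset_Icc_self hx)).hasDerivAt (Icc_mem_nhds hx.1 hx.2)).deriv]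
    exact sub_pos.2 (hlt x hx)
  have hleft : 0 ≤ wronskian c := by
    have := mul_deriv_nonneg_of_isMinOn (Hf c hc).1 (h.isMinOn h.left_eq) hc hd
    have := nonneg_of_mul_nonneg_right this (sub_pos.2 h.lt)
    simpa [wronskian, h.left_eq] using mul_nonneg (hφ0 c hc) this
  have hright : wronskian d ≤ 0 := by
    have := mul_deriv_nonneg_of_isMinOn (Hf d hd).1 (h.isMinOn h.right_eq) hd hc
    have := nonpos_of_mul_nonneg_right this (sub_neg.2 h.lt)
    simpa [wronskian, h.right_eq] using mul_nonpos_of_nonneg_of_nonpos (hφ0 d hd) this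
  exact ((hmono hc hd h.lt).trans_le hright).not_ge hleft

/-- The principal Dirichlet eigenvalue `λ₁` of `-∂²` on `(a, b)`. -/
noncomputable def firstEigenvalue (a b : ℝ) : ℝ := (π / (b - a)) ^ 2

/-- The principal Dirichlet eigenfunction of `-∂²` on `(a, b)`, normalised to have maximum `1`. -/
noncomputable def firstEigenfunction (a b x : ℝ) : ℝ := sin (π / (b - a) * (x - a))

theorem firstEigenvalue_pos (hab : a < b) : 0 < firstEigenvalue a b := by
  have := sub_pos.2 hab
  unfold firstEigenvalue
  positivity

theorem hasSecondDerivOn_firstEigenfunction (a b : ℝ) (s : Set ℝ) :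
    HasSecondDerivOn (firstEigenfunction a b)
      (fun x => -(firstEigenvalue a b * firstEigenfunction a b x)) s := by
  set k := π / (b - a)
  have hlin : ∀ x : ℝ, HasDerivAt (fun y => k * (y - a)) k x := fun x => by
    simpa using ((hasDerivAt_id x).sub_const a).const_mul k
  refine ⟨fun x => k * cos (k * (x - a)), fun x _ => ⟨?_, ?_⟩⟩
  · exact ((hlin x).sin.congr_deriv (mul_comm _ _)).hasDerivWithinAt
  · refine (((hlin x).cos.const_mul k).congr_deriv ?_).hasDerivWithinAt
    simp only [firstEigenvalue, firstEigenfunction]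
    ring

theorem isNodalInterval_firstEigenfunction (hab : a < b) :
    IsNodalInterval (firstEigenfunction a b) a b where
  lt := hab
  left_eq := by simp [firstEigenfunction]
  right_eq := by simp [firstEigenfunction, div_mul_cancel₀ π (sub_pos.2 hab).ne']
  pos x hx := by
    have hlen := sub_pos.2 hab
    have hxa := sub_pos.2 hx.1
    refine sin_pos_of_pos_of_lt_pi (by positivity) ?_
    rw [div_mul_eq_mul_div, div_lt_iff₀ hlen]
    exact mul_lt_mul_of_pos_left (sub_lt_sub_right hx.2 a) pi_pos

theorem IsNodalInterval.firstEigenvalue_lt (h : IsNodalInterval f c d)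
    (hf : HasSecondDerivOn f g (Icc c d)) (hfg : ∀ x ∈ Ioo c d, -(C * f x) < g x) :
    firstEigenvalue c d < C := by
  have hsin := isNodalInterval_firstEigenfunction h.lt
  obtain ⟨x, hx, hle⟩ := h.exists_mul_le_mul hf (hasSecondDerivOn_firstEigenfunction c d _)
    hsin.nonneg
  have hpos := mul_pos (hsin.pos x hx) (h.pos x hx)
  have := mul_lt_mul_of_pos_left (hfg x hx) (hsin.pos x hx)
  exact lt_of_mul_lt_mul_left (by linarith) hpos.le

theorem IsNodalInterval.lt_firstEigenvalue (h : IsNodalInterval f c d)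
    (hf : HasSecondDerivOn f g (Icc c d)) (hfg : ∀ x ∈ Ioo c d, g x < -(C * f x)) :
    C < firstEigenvalue c d := by
  have hsin := isNodalInterval_firstEigenfunction h.lt
  obtain ⟨x, hx, hle⟩ := hsin.exists_mul_le_mul (hasSecondDerivOn_firstEigenfunction c d _) hf
    h.nonneg
  have hpos := mul_pos (hsin.pos x hx) (h.pos x hx)
  have := mul_lt_mul_of_pos_left (hfg x hx) (hsin.pos x hx)
  exact lt_of_mul_lt_mul_left (by linarith) hpos.le

end Nodal

section MaximumPrinciple

variable {f g h : ℝ → ℝ} {a b x y C K : ℝ}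

theorem deriv_deriv_nonneg_of_isLocalMin (hmin : IsLocalMin f x) (hf : ContinuousAt f x) :
    0 ≤ deriv (deriv f) x := by
  by_contra! hneg
  have hmax : IsLocalMax f x := isLocalMax_of_deriv_deriv_neg hneg hmin.deriv_eq_zero hf
  have hconst : f =ᶠ[𝓝 x] fun _ => f x := by
    filter_upwards [hmin, hmax] with y h₁ h₂ using le_antisymm h₂ h₁
  have hderiv : deriv f =ᶠ[𝓝 x] fun _ => 0 := by simpa using hconst.deriv
  exact hneg.ne (by simpa using hderiv.deriv_eq)

namespace HasSecondDerivOn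

theorem nonneg_of_isMinOn (hf : HasSecondDerivOn f g (Icc a b)) (hx : x ∈ Ioo a b)
    (hmin : IsMinOn f (Icc a b) x) : 0 ≤ g x := by
  have hnhds := Icc_mem_nhds hx.1 hx.2
  rw [← hf.deriv_deriv hnhds]
  exact deriv_deriv_nonneg_of_isLocalMin (hmin.isLocalMin hnhds)
    (hf.continuousOn.continuousAt hnhds)

theorem pos_of_boundary_nonneg (hf : HasSecondDerivOn f g (Icc a b)) (ha : 0 ≤ f a) (hb : 0 ≤ f b)
    (hg : ∀ x ∈ Ioo a b, f x ≤ 0 → g x < 0) : ∀ x ∈ Ioo a b, 0 < f x := by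
  intro x hx
  by_contra! hfx
  obtain ⟨y, hy, hmin⟩ := isCompact_Icc.exists_isMinOn ⟨x, Ioo_subset_Icc_self hx⟩ hf.continuousOn
  have hyx : f y ≤ f x := hmin (Ioo_subset_Icc_self hx)
  have hinterior : ∃ z ∈ Ioo a b, IsMinOn f (Icc a b) z ∧ f z ≤ 0 := by
    by_cases hy' : y ∈ Ioo a b
    · exact ⟨y, hy', hmin, hyx.trans hfx⟩
    · have hfy : 0 ≤ f y := by
        obtain rfl | hay := hy.1.eq_or_lt
        · exact ha
        · rwa [hy.2.eq_of_not_lt fun hyb => hy' ⟨hay, hyb⟩]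
      exact ⟨x, hx, fun z hz => (hfx.trans hfy).trans (hmin hz), hfx⟩
  obtain ⟨z, hz, hzmin, hfz⟩ := hinterior
  exact (hg z hz hfz).not_ge (hf.nonneg_of_isMinOn hz hzmin)

theorem le_of_boundary_le (hf : HasSecondDerivOn f g (Icc a b)) (ha : f a ≤ K) (hb : f b ≤ K)
    (hg : ∀ x ∈ Ioo a b, K < f x → 0 ≤ g x) : ∀ x ∈ Icc a b, f x ≤ K := by
  intro x hx
  by_contra! hfx
  have hsub := (hf.const_sub K).neg
  obtain ⟨c, hc, d, hd, hnodal⟩ := exists_isNodalInterval hsub.continuousOn (by simpa using ha)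
    (by simpa using hb) hx (by simpa using hfx)
  refine lt_irrefl (firstEigenvalue c d) (hnodal.firstEigenvalue_lt
    (hsub.mono (Icc_subset_Icc hc.1 hd.2)) fun y hy => ?_)
  have hpos := hnodal.pos y hy
  have hKy : K < f y := by simpa using hpos
  have hgy := hg y ⟨hc.1.trans_lt hy.1, hy.2.trans_le hd.2⟩ hKy
  have := mul_pos (firstEigenvalue_pos hnodal.lt) hpos
  simp only [Pi.neg_apply, neg_neg] at this ⊢
  linarith

theorem eqOn (hf : HasSecondDerivOn f g (Icc a b)) (hh : HasSecondDerivOn h g (Icc a b))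
    (ha : f a = h a) (hb : f b = h b) : EqOn f h (Icc a b) := by
  have hle := (hf.sub hh).le_of_boundary_le (sub_nonpos.2 ha.le) (sub_nonpos.2 hb.le)
    fun x _ _ => (sub_self (g x)).ge
  have hge := (hh.sub hf).le_of_boundary_le (sub_nonpos.2 ha.ge) (sub_nonpos.2 hb.ge)
    fun x _ _ => (sub_self (g x)).ge
  exact fun x hx => le_antisymm (sub_nonpos.1 (hle x hx)) (sub_nonpos.1 (hge x hx))

theorem pos_of_nonneg (hf : HasSecondDerivOn f g (Icc a b))
    (hbound : ∀ x ∈ Icc a b, |g x| ≤ C * |f x|) (h0 : ∀ x ∈ Icc a b, 0 ≤ f x)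
    (hy : y ∈ Icc a b) (hfy : f y ≠ 0) : ∀ x ∈ Ioo a b, 0 < f x := by
  intro x hx
  have hx' := Ioo_subset_Icc_self hx
  refine (h0 x hx').lt_of_ne' fun hfx => hfy ?_
  have hmin : IsLocalMin f x := by
    filter_upwards [Icc_mem_nhds hx.1 hx.2] with z hz using hfx.trans_le (h0 z hz)
  have hderiv := (hf.differentiableWithinAt hx').differentiableAt (Icc_mem_nhds hx.1 hx.2)
    |>.hasDerivAt
  rw [hmin.deriv_eq_zero] at hderiv
  exact hf.eq_zero_of_norm_le (hx.1.trans hx.2) hbound hx' hfx hderiv.hasDerivWithinAt y hy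

end HasSecondDerivOn

theorem exists_pos_le_firstEigenvalue (C : ℝ) {ℓ : ℝ} (hℓ : 0 < ℓ) :
    ∃ δ > 0, δ < ℓ ∧ ∀ c d, c < d → d - c ≤ δ → C ≤ firstEigenvalue c d := by
  refine ⟨min (ℓ / 2) (π / (|C| + 1)), by positivity, (min_le_left _ _).trans_lt (by linarith),
    fun c d hcd hlen => ?_⟩
  have hpos := sub_pos.2 hcd
  have hroot : |C| + 1 ≤ π / (d - c) := by
    rw [le_div_iff₀ hpos, mul_comm, ← le_div_iff₀ (by positivity)]
    exact hlen.trans (min_le_right _ _)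
  calc C ≤ |C| + 1 := by linarith [le_abs_self C]
    _ ≤ (|C| + 1) ^ 2 := le_self_pow₀ (by simp) two_ne_zero
    _ ≤ firstEigenvalue c d := by unfold firstEigenvalue; gcongr

/- Maximum principle in thin layers: away from the boundary `h` is positive because it is close to
`f`, and a negative nodal interval near the boundary would be too short for its eigenvalue. -/
theorem exists_forall_pos_of_near (hab : a < b) (hf : ContinuousOn f (Icc a b))
    (hpos : ∀ x ∈ Ioo a b, 0 < f x) (C : ℝ) :
    ∃ η > 0, ∀ h k : ℝ → ℝ, HasSecondDerivOn h k (Icc a b) → h a = 0 → h b = 0 →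
      (∀ x ∈ Icc a b, |k x| ≤ C * |h x|) → (∀ x ∈ Icc a b, |h x - f x| < η) →
      ∀ x ∈ Ioo a b, 0 < h x := by
  obtain ⟨δ, hδ, hδlt, hthin⟩ := exists_pos_le_firstEigenvalue (C + 1) (half_pos (sub_pos.2 hab))
  have hcore : Icc (a + δ) (b - δ) ⊆ Ioo a b := fun x hx => ⟨by linarith [hx.1], by linarith [hx.2]⟩
  obtain ⟨y, hy, hmin⟩ := isCompact_Icc.exists_isMinOn (nonempty_Icc.2 (by linarith))
    (hf.mono (hcore.trans Ioo_subset_Icc_self))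
  refine ⟨f y, hpos y (hcore hy), fun h k hh ha hb hbound hnear => ?_⟩
  have hhcore : ∀ x ∈ Icc (a + δ) (b - δ), 0 < h x := fun x hx => by
    have hyx : f y ≤ f x := hmin hx
    linarith [neg_lt_of_abs_lt (hnear x (Ioo_subset_Icc_self (hcore hx)))]
  refine hh.pos_of_nonneg hbound (fun x hx => ?_) (Ioo_subset_Icc_self (hcore hy)) (hhcore y hy).ne'
  by_contra! hneg
  obtain ⟨c, hc, d, hd, hnodal⟩ := exists_isNodalInterval hh.neg.continuousOn (by simp [ha])
    (by simp [hb]) hx (neg_pos.2 hneg)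
  have hnegative : ∀ z ∈ Ioo c d, h z < 0 := fun z hz => neg_pos.1 (hnodal.pos z hz)
  have hlt : firstEigenvalue c d < C + 1 :=
    hnodal.firstEigenvalue_lt (hh.neg.mono (Icc_subset_Icc hc.1 hd.2)) fun z hz => by
      have := hbound z ⟨hc.1.trans hz.1.le, hz.2.le.trans hd.2⟩
      rw [abs_of_neg (hnegative z hz)] at this
      simp only [Pi.neg_apply]
      linarith [le_abs_self (k z), hnegative z hz]
  have hlayer : d ≤ a + δ ∨ b - δ ≤ c := by
    by_contra! hmeet
    have hz : max c (a + δ) < min d (b - δ) :=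
      max_lt (lt_min hnodal.lt hmeet.2) (lt_min hmeet.1 (by linarith))
    obtain ⟨z, hz₁, hz₂⟩ := exists_between hz
    obtain ⟨hcz, haz⟩ := max_lt_iff.1 hz₁
    obtain ⟨hzd, hzb⟩ := lt_min_iff.1 hz₂
    exact (hnegative z ⟨hcz, hzd⟩).not_gt (hhcore z ⟨haz.le, hzb.le⟩)
  refine hlt.not_ge (hthin c d hnodal.lt ?_)
  obtain h | h := hlayer <;> linarith [hc.1, hd.2]

end MaximumPrinciple

section GreenOperator

variable {E : Type*} [NormedAddCommGroup E] [NormedSpace ℝ E] [CompleteSpace E]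
  {a b : ℝ} (hab : a ≤ b)

theorem hasDerivAt_integral_IccExtend (g : C(Icc a b, E)) (x : ℝ) :
    HasDerivAt (fun y => ∫ t in a..y, IccExtend hab g t) (IccExtend hab g x) x :=
  (g.continuous.Icc_extend'.integral_hasStrictDerivAt a x).hasDerivAt

/-- The Volterra operator `g ↦ ∫ t in a..x, g t` on continuous functions. -/
noncomputable def volterra : C(Icc a b, E) →L[ℝ] C(Icc a b, E) :=
  LinearMap.mkContinuous
    { toFun := fun g => ⟨fun x => ∫ t in a..x, IccExtend hab g t, by
        have := fun x => (hasDerivAt_integral_IccExtend hab g x).continuousAt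
        exact (continuous_iff_continuousAt.2 this).comp continuous_subtype_val⟩
      map_add' := fun g h => ContinuousMap.ext fun x => intervalIntegral.integral_add
        (g.continuous.Icc_extend'.intervalIntegrable a x)
        (h.continuous.Icc_extend'.intervalIntegrable a x)
      map_smul' := fun c g => ContinuousMap.ext fun x => intervalIntegral.integral_smul c _ }
    (b - a) fun g => by
      refine (ContinuousMap.norm_le _ (by nlinarith [norm_nonneg g])).2 fun x => ?_
      refine (intervalIntegral.norm_integral_le_of_norm_le_const (C := ‖g‖)
        fun t _ => g.norm_coe_le_norm _).trans ?_
      rw [abs_of_nonneg (sub_nonneg.2 x.2.1), mul_comm]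
      gcongr
      exact x.2.2

theorem volterra_apply (g : C(Icc a b, E)) (x : Icc a b) :
    volterra hab g x = ∫ t in a..x, IccExtend hab g t := rfl

theorem hasDerivWithinAt_volterra (g : C(Icc a b, E)) {x : ℝ} (hx : x ∈ Icc a b) :
    HasDerivWithinAt (IccExtend hab (volterra hab g)) (IccExtend hab g x) (Icc a b) x :=
  (hasDerivAt_integral_IccExtend hab g x).hasDerivWithinAt.congr
    (fun y hy => by rw [IccExtend_of_mem hab _ hy, volterra_apply])
    (by rw [IccExtend_of_mem hab _ hx, volterra_apply])

theorem norm_volterra_sub_le (g : C(Icc a b, E)) (x y : Icc a b) :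
    ‖volterra hab g x - volterra hab g y‖ ≤ ‖g‖ * dist x y := by
  rw [volterra_apply, volterra_apply, intervalIntegral.integral_interval_sub_left
    (g.continuous.Icc_extend'.intervalIntegrable _ _)
    (g.continuous.Icc_extend'.intervalIntegrable _ _)]
  exact intervalIntegral.norm_integral_le_of_norm_le_const fun t _ => g.norm_coe_le_norm _

theorem isCompactOperator_volterra [ProperSpace E] :
    IsCompactOperator (volterra hab : C(Icc a b, E) → C(Icc a b, E)) := by
  let e := ContinuousMap.linearIsometryBoundedOfCompact (Icc a b) E ℝ
  let V : C(Icc a b, E) →L[ℝ] BoundedContinuousFunction (Icc a b) E :=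
    (e.toContinuousLinearEquiv : C(Icc a b, E) →L[ℝ] _) ∘L volterra hab
  have hV : IsCompactOperator V := by
    refine (isCompactOperator_iff_isCompact_closure_image_closedBall
      (V : C(Icc a b, E) →ₗ[ℝ] BoundedContinuousFunction (Icc a b) E) one_pos).2 ?_
    refine BoundedContinuousFunction.arzela_ascoli (Metric.closedBall 0 (‖V‖ * 1))
      (isCompact_closedBall _ _) _ ?_ ?_
    · rintro _ x ⟨g, hg, rfl⟩
      rw [mem_closedBall_zero_iff] at hg ⊢
      exact ((V g).norm_coe_le_norm x).trans (V.le_of_opNorm_le_of_le le_rfl hg)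
    · refine Metric.equicontinuous_of_continuity_modulus id tendsto_id _ ?_
      rintro x y ⟨_, g, hg, rfl⟩
      rw [mem_closedBall_zero_iff] at hg
      calc dist (V g x) (V g y) = ‖volterra hab g x - volterra hab g y‖ := dist_eq_norm _ _
        _ ≤ ‖g‖ * dist x y := norm_volterra_sub_le hab g x y
        _ ≤ dist x y := mul_le_of_le_one_left dist_nonneg hg
  have hcomp := hV.clm_comp (e.symm.toContinuousLinearEquiv :
    BoundedContinuousFunction (Icc a b) E →L[ℝ] C(Icc a b, E))
  simpa [V, Function.comp_def] using hcomp

/-- The operator `g ↦ g b * (x - a) / (b - a) - g`: for `g a = 0` it subtracts `g` from the affine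
function with the same boundary values. -/
noncomputable def affineSub : C(Icc a b, ℝ) →L[ℝ] C(Icc a b, ℝ) :=
  (ContinuousMap.evalCLM ℝ (⟨b, right_mem_Icc.2 hab⟩ : Icc a b)).smulRight
    (⟨fun x => (x - a) / (b - a), by fun_prop⟩ : C(Icc a b, ℝ)) - ContinuousLinearMap.id ℝ _

/-- The Green operator of `-∂²` on `[a, b]` with zero boundary values. -/
noncomputable def green : C(Icc a b, ℝ) →L[ℝ] C(Icc a b, ℝ) :=
  (affineSub hab ∘L volterra hab) ∘L volterra hab

theorem isCompactOperator_green : IsCompactOperator (green hab) :=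
  (isCompactOperator_volterra hab).clm_comp (affineSub hab ∘L volterra hab)

theorem green_apply (g : C(Icc a b, ℝ)) (x : Icc a b) :
    green hab g x = volterra hab (volterra hab g) ⟨b, right_mem_Icc.2 hab⟩ * ((x - a) / (b - a)) -
      volterra hab (volterra hab g) x := rfl

theorem hasSecondDerivOn_green (g : C(Icc a b, ℝ)) :
    HasSecondDerivOn (IccExtend hab (green hab g)) (-IccExtend hab g) (Icc a b) := by
  set c := volterra hab (volterra hab g) ⟨b, right_mem_Icc.2 hab⟩
  refine ⟨fun x => c * (1 / (b - a)) - IccExtend hab (volterra hab g) x, fun x hx => ⟨?_, ?_⟩⟩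
  · have haffine : HasDerivWithinAt (fun y => c * ((y - a) / (b - a))) (c * (1 / (b - a)))
        (Icc a b) x :=
      (((hasDerivWithinAt_id x _).sub_const a).div_const (b - a)).const_mul c
    refine (haffine.sub (hasDerivWithinAt_volterra hab _ hx)).congr (fun y hy => ?_) ?_
    · simp only [Pi.sub_apply, IccExtend_of_mem hab _ hy, green_apply, c]
    · simp only [Pi.sub_apply, IccExtend_of_mem hab _ hx, green_apply, c]
  · exact (hasDerivWithinAt_volterra hab g hx).const_sub _

theorem IccExtend_green_left (g : C(Icc a b, ℝ)) : IccExtend hab (green hab g) a = 0 := by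
  simp [green_apply, volterra_apply]

theorem IccExtend_green_right (hab : a < b) (g : C(Icc a b, ℝ)) :
    IccExtend hab.le (green hab.le g) b = 0 := by
  simp [green_apply, div_self (sub_pos.2 hab).ne']

theorem green_eq_iff (hab : a < b) {f g : C(Icc a b, ℝ)} :
    green hab.le g = f ↔ HasSecondDerivOn (IccExtend hab.le f) (-IccExtend hab.le g) (Icc a b) ∧
      IccExtend hab.le f a = 0 ∧ IccExtend hab.le f b = 0 := by
  constructor
  · rintro rfl
    exact ⟨hasSecondDerivOn_green _ g, IccExtend_green_left _ g, IccExtend_green_right hab g⟩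
  · rintro ⟨hf, ha, hb⟩
    have heq := (hasSecondDerivOn_green hab.le g).eqOn hf ((IccExtend_green_left _ g).trans ha.symm)
      ((IccExtend_green_right hab g).trans hb.symm)
    ext x
    simpa only [IccExtend_val] using heq x.2

end GreenOperator

section CompactFixedPoint

variable {P X Y : Type*} [NormedAddCommGroup X] [NormedSpace ℝ X] [NormedAddCommGroup Y]
  [NormedSpace ℝ Y]

theorem isCompactOperator_prodMap {S : X →L[ℝ] X} {T : Y →L[ℝ] Y} (hS : IsCompactOperator S)
    (hT : IsCompactOperator T) : IsCompactOperator (S.prodMap T) := by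
  have hsum : ⇑(S.prodMap T) =
      (ContinuousLinearMap.inl ℝ X Y) ∘ S ∘ (ContinuousLinearMap.fst ℝ X Y) +
        (ContinuousLinearMap.inr ℝ X Y) ∘ T ∘ (ContinuousLinearMap.snd ℝ X Y) := by
    funext p
    simp [Prod.map]
  rw [hsum]
  exact ((hS.comp_clm (.fst ℝ X Y)).clm_comp (.inl ℝ X Y)).add
    ((hT.comp_clm (.snd ℝ X Y)).clm_comp (.inr ℝ X Y))

theorem isInvertible_one_sub_of_isCompactOperator [CompleteSpace X] {T : X →L[ℝ] X}
    (hT : IsCompactOperator T) (hker : ∀ x, T x = x → x = 0) :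
    (1 - T : X →L[ℝ] X).IsInvertible := by
  have hnot : ¬ Module.End.HasEigenvalue (T : Module.End ℝ X) 1 := fun hev => by
    obtain ⟨x, hx⟩ := hev.exists_hasEigenvector
    exact hx.2 (hker x (by simpa using hx.apply_eq_smul))
  have hunit : IsUnit (1 - T) := by
    have := (hT.hasEigenvalue_or_mem_resolventSet one_ne_zero).resolve_left hnot
    rwa [spectrum.mem_resolventSet_iff, map_one] at this
  exact ⟨ContinuousLinearEquiv.unitsEquiv ℝ X hunit.unit, rfl⟩

theorem exists_subseq_tendsto_fixedPoint [TopologicalSpace P] {K : Y →L[ℝ] X}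
    (hK : IsCompactOperator K) {R : P × X → Y} (hR : Continuous R) {p : ℕ → P} {p₀ : P}
    (hp : Tendsto p atTop (𝓝 p₀)) {x : ℕ → X} (hfix : ∀ n, K (R (p n, x n)) = x n)
    (hbdd : Bornology.IsBounded (range fun n => R (p n, x n))) :
    ∃ x₀, K (R (p₀, x₀)) = x₀ ∧ ∃ φ : ℕ → ℕ, StrictMono φ ∧ Tendsto (x ∘ φ) atTop (𝓝 x₀) := by
  obtain ⟨k, hk, hsub⟩ := hK.image_subset_compact_of_bounded (f := (K : Y →ₗ[ℝ] X)) hbdd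
  obtain ⟨x₀, -, φ, hφ, hx⟩ := hk.tendsto_subseq fun n => hsub ⟨_, mem_range_self n, hfix n⟩
  have hlim : Tendsto (fun n => K (R (p (φ n), x (φ n)))) atTop (𝓝 (K (R (p₀, x₀)))) :=
    ((K.continuous.comp hR).tendsto (p₀, x₀)).comp
      ((hp.comp hφ.tendsto_atTop).prodMk_nhds hx)
  exact ⟨x₀, tendsto_nhds_unique (hlim.congr fun n => hfix (φ n)) hx, φ, hφ, hx⟩

theorem exists_tendsto_fixedPoint_of_isCompactOperator [NormedAddCommGroup P]
    [NormedSpace ℝ P] [CompleteSpace P] [CompleteSpace X] {F : P × X → X}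
    {F' : P × X →L[ℝ] X} {p : P} {x : X} (hF : HasStrictFDerivAt F F' (p, x))
    (hfix : F (p, x) = x) (hcompact : IsCompactOperator (F' ∘L .inr ℝ P X))
    (hker : ∀ y, F' (0, y) = y → y = 0) :
    ∃ ψ : P → X, Tendsto ψ (𝓝 p) (𝓝 x) ∧ ∀ᶠ q in 𝓝 p, F (q, ψ q) = ψ q := by
  have hG : HasStrictFDerivAt (fun z => z.2 - F z) (.snd ℝ P X - F') (p, x) :=
    hasStrictFDerivAt_snd.sub hF
  have hinv : ((.snd ℝ P X - F') ∘L .inr ℝ P X).IsInvertible := by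
    convert isInvertible_one_sub_of_isCompactOperator hcompact hker using 1
    ext y
    simp
  refine ⟨hG.implicitFunctionOfProdDomain hinv, hG.tendsto_implicitFunctionOfProdDomain hinv, ?_⟩
  filter_upwards [hG.eventually_apply_implicitFunctionOfProdDomain hinv] with q hq
  exact (sub_eq_zero.1 (hq.trans (sub_eq_zero.2 hfix.symm))).symm

end CompactFixedPoint

section PredatorPrey

variable {p c q e w z f : ℝ → ℝ} {a b l r x f' : ℝ} {s : Set ℝ}

/-- `-∂² + p` has a strict nonnegative supersolution on `[a, b]`. This expresses that its principal
Dirichlet eigenvalue is positive. -/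
def HasStrictSupersolution (a b : ℝ) (p : ℝ → ℝ) : Prop :=
  ∃ φ ψ : ℝ → ℝ, HasSecondDerivOn φ ψ (Icc a b) ∧ (∀ x ∈ Icc a b, 0 ≤ φ x) ∧
    ∀ x ∈ Ioo a b, ψ x < p x * φ x

/-- `w` solves `-w″ + p w = -c z` with zero boundary values, where `c ≥ 0` and `-∂² + p` satisfies
the maximum principle: the presence of `z` inhibits `w`. -/
structure IsInhibitedBy (a b : ℝ) (p c w z : ℝ → ℝ) : Prop where
  ode : HasSecondDerivOn w (fun x => p x * w x + c x * z x) (Icc a b)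
  left_eq : w a = 0
  right_eq : w b = 0
  continuousOn_potential : ContinuousOn p (Icc a b)
  continuousOn_coupling : ContinuousOn c (Icc a b)
  coupling_nonneg : ∀ x ∈ Ioo a b, 0 ≤ c x
  supersolution : HasStrictSupersolution a b p

namespace IsInhibitedBy

theorem neg (h : IsInhibitedBy a b p c w z) : IsInhibitedBy a b p c (-w) (-z) :=
  { h with
    ode := h.ode.neg.congr (eqOn_refl _ _) fun x _ => by simp only [Pi.neg_apply]; ring
    left_eq := by simp [h.left_eq]
    right_eq := by simp [h.right_eq] }

theorem exists_neg (h : IsInhibitedBy a b p c w z) (hw : IsNodalInterval w l r) (hl : a ≤ l)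
    (hr : r ≤ b) : ∃ x ∈ Ioo l r, z x < 0 := by
  by_contra! hz
  have hsub := Icc_subset_Icc hl hr
  obtain ⟨φ, ψ, hφ, hφ0, hψ⟩ := h.supersolution
  obtain ⟨x, hx, hle⟩ := hw.exists_mul_le_mul (h.ode.mono hsub) (hφ.mono hsub)
    fun x hx => hφ0 x (hsub hx)
  have hx' : x ∈ Ioo a b := Ioo_subset_Ioo hl hr hx
  have hcz := mul_nonneg (hφ0 x (Ioo_subset_Icc_self hx'))
    (mul_nonneg (h.coupling_nonneg x hx') (hz x hx))
  have hwψ := mul_lt_mul_of_pos_left (hψ x hx') (hw.pos x hx)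
  linarith

theorem exists_norm_le (h : IsInhibitedBy a b p c w z) :
    ∃ C, ∀ x ∈ Icc a b, ‖p x * w x + c x * z x‖ ≤ C * max ‖w x‖ ‖z x‖ := by
  obtain ⟨P, hP⟩ := isCompact_Icc.exists_bound_of_continuousOn h.continuousOn_potential
  obtain ⟨K, hK⟩ := isCompact_Icc.exists_bound_of_continuousOn h.continuousOn_coupling
  refine ⟨P + K, fun x hx => (norm_add_le _ _).trans ?_⟩
  rw [norm_mul, norm_mul, add_mul]
  have := (norm_nonneg _).trans (hP x hx)
  have := (norm_nonneg _).trans (hK x hx)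
  gcongr
  · exact hP x hx
  · exact le_max_left _ _
  · exact hK x hx
  · exact le_max_right _ _

end IsInhibitedBy

/-- A linear predator-prey system: the predator `z` inhibits the prey `w`, whereas the absence of
`w` inhibits `z`. -/
structure IsPredatorPrey (a b : ℝ) (p c q e w z : ℝ → ℝ) : Prop where
  prey : IsInhibitedBy a b p c w z
  predator : IsInhibitedBy a b q e z (-w)

/-- `r` ends a nodal interval of `z` at the start of which `w ≤ 0`. In the `(w, z)` plane the curve
`x ↦ (w x, z x)` crosses a half plane between two such consecutive events. -/
def IsTurningPoint (a b : ℝ) (w z : ℝ → ℝ) (r : ℝ) : Prop :=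
  ∃ l, a ≤ l ∧ r ≤ b ∧ IsNodalInterval z l r ∧ w l ≤ 0

theorem frequently_nhdsWithin_csSup {S : Set ℝ} {P : ℝ → Prop} (hS : S ⊆ Icc a b)
    (hne : S.Nonempty) (hstep : ∀ r ∈ S, ∃ y, r ≤ y ∧ P y ∧ ∃ r' ∈ S, y < r') :
    ∃ᶠ x in 𝓝[Icc a b \ {sSup S}] sSup S, P x := by
  have hbdd : BddAbove S := bddAbove_Icc.mono hS
  have hsup : sSup S ≤ b := csSup_le hne fun r hr => (hS hr).2
  have hleft : ∃ᶠ x in 𝓝[<] sSup S, P x := by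
    refine (nhdsLT_basis (sSup S)).frequently_iff.2 fun t ht => ?_
    obtain ⟨r, hr, htr⟩ := exists_lt_of_lt_csSup hne ht
    obtain ⟨y, hry, hy, r', hr', hyr'⟩ := hstep r hr
    exact ⟨y, ⟨htr.trans_le hry, hyr'.trans_le (le_csSup hbdd hr')⟩, hy⟩
  obtain ⟨r, hr⟩ := hne
  obtain ⟨y, hry, -, r', hr', hyr'⟩ := hstep r hr
  have hlt : a < sSup S := ((hS hr).1.trans hry).trans_lt (hyr'.trans_le (le_csSup hbdd hr'))
  rw [← nhdsWithin_Ico_eq_nhdsLT hlt] at hleft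
  exact hleft.filter_mono (nhdsWithin_mono _ fun x hx => ⟨⟨hx.1, hx.2.le.trans hsup⟩, hx.2.ne⟩)

theorem eq_zero_and_hasDerivWithinAt_zero_of_frequently (hf : DifferentiableWithinAt ℝ f s x)
    (hfreq : ∃ᶠ y in 𝓝[s \ {x}] x, f y = 0) : f x = 0 ∧ HasDerivWithinAt f 0 s x := by
  have hzero : f x = 0 := isClosed_singleton.mem_of_frequently_of_tendsto hfreq
    (hf.continuousWithinAt.mono sdiff_subset)
  have hderiv : derivWithin f s x = 0 := by
    by_contra hne
    exact hfreq (hf.hasDerivWithinAt.eventually_ne hne)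
  exact ⟨hzero, hderiv ▸ hf.hasDerivWithinAt⟩

namespace IsPredatorPrey

theorem neg (h : IsPredatorPrey a b p c q e w z) : IsPredatorPrey a b p c q e (-w) (-z) :=
  ⟨h.prey.neg, h.predator.neg⟩

theorem rotate (h : IsPredatorPrey a b p c q e w z) : IsPredatorPrey a b q e p c (-z) w :=
  ⟨neg_neg w ▸ h.predator.neg, (neg_neg z).symm ▸ h.prey⟩

theorem exists_turningPoint_gt (h : IsPredatorPrey a b p c q e w z)
    (hr : IsTurningPoint a b w z r) : ∃ r' > r, IsTurningPoint a b (-z) w r' := by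
  obtain ⟨l, hal, hrb, hz, hwl⟩ := hr
  obtain ⟨y, hy, hwy⟩ := h.predator.exists_neg hz hal hrb
  obtain ⟨l', hl', r', hr', hw⟩ := exists_isNodalInterval
    (h.prey.ode.continuousOn.mono (Icc_subset_Icc_left hal)) hwl h.prey.right_eq.le
    ⟨hy.1.le, hy.2.le.trans hrb⟩ (neg_neg_iff_pos.1 hwy)
  obtain ⟨t, ht, hzt⟩ := h.prey.exists_neg hw (hal.trans hl'.1) hr'.2
  have hrt : r ≤ t := not_lt.1 fun htr => (hz.pos t ⟨hl'.1.trans_lt ht.1, htr⟩).not_gt hzt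
  exact ⟨r', hrt.trans_lt ht.2, l', hal.trans hl'.1, hr'.2, hw,
    neg_nonpos.2 (hz.nonneg l' ⟨hl'.1, (hl'.2.trans hy.2).le⟩)⟩

theorem exists_accumulation (h : IsPredatorPrey a b p c q e w z)
    (hr : IsTurningPoint a b w z r) :
    ∃ t ∈ Icc a b, (∃ᶠ x in 𝓝[Icc a b \ {t}] t, w x = 0) ∧
      ∃ᶠ x in 𝓝[Icc a b \ {t}] t, z x = 0 := by
  let S : Set ℝ := {r | IsTurningPoint a b w z r ∨ IsTurningPoint a b (-w) (-z) r}
  have hS : S ⊆ Icc a b := by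
    rintro r (⟨l, hal, hrb, hz, -⟩ | ⟨l, hal, hrb, hz, -⟩) <;> exact ⟨hal.trans hz.lt.le, hrb⟩
  have hzS : ∀ r ∈ S, z r = 0 := by
    rintro r (⟨l, -, -, hz, -⟩ | ⟨l, -, -, hz, -⟩)
    · exact hz.right_eq
    · exact neg_eq_zero.1 hz.right_eq
  have hhalf : ∀ r ∈ S, ∃ y, r < y ∧ w y = 0 ∧ ∃ r' ∈ S, y < r' := by
    rintro r (hr | hr)
    · obtain ⟨y, hy, hturn⟩ := h.exists_turningPoint_gt hr
      obtain ⟨r', hr', hturn'⟩ := h.rotate.exists_turningPoint_gt hturn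
      exact ⟨y, hy, hturn.choose_spec.2.2.1.right_eq, r', Or.inr hturn', hr'⟩
    · obtain ⟨y, hy, hturn⟩ := h.neg.exists_turningPoint_gt hr
      obtain ⟨r', hr', hturn'⟩ := h.neg.rotate.exists_turningPoint_gt hturn
      exact ⟨y, hy, neg_eq_zero.1 hturn.choose_spec.2.2.1.right_eq, r',
        Or.inl (by simpa only [neg_neg] using hturn'), hr'⟩
  have hne : S.Nonempty := ⟨r, Or.inl hr⟩
  refine ⟨sSup S, ⟨?_, csSup_le hne fun r hr => (hS hr).2⟩,
    frequently_nhdsWithin_csSup hS hne fun r hr => ?_,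
    frequently_nhdsWithin_csSup hS hne fun r hr => ?_⟩
  · exact (hS (Or.inl hr)).1.trans (le_csSup (bddAbove_Icc.mono hS) (Or.inl hr))
  · obtain ⟨y, hy, hrest⟩ := hhalf r hr
    exact ⟨y, hy.le, hrest⟩
  · obtain ⟨y, hy, -, r', hr', hyr'⟩ := hhalf r hr
    exact ⟨r, le_rfl, hzS r hr, r', hr', hy.trans hyr'⟩

theorem eq_zero_of_cauchy (hab : a < b) (h : IsPredatorPrey a b p c q e w z) (hx : x ∈ Icc a b)
    (hw : w x = 0 ∧ HasDerivWithinAt w 0 (Icc a b) x)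
    (hz : z x = 0 ∧ HasDerivWithinAt z 0 (Icc a b) x) : ∀ y ∈ Icc a b, w y = 0 ∧ z y = 0 := by
  obtain ⟨C, hC⟩ := h.prey.exists_norm_le
  obtain ⟨D, hD⟩ := h.predator.exists_norm_le
  have hzero := (h.prey.ode.prodMk h.predator.ode).eq_zero_of_norm_le hab (C := max C D)
    (fun y hy => ?_) hx (Prod.ext hw.1 hz.1) (hw.2.prodMk hz.2)
  · exact fun y hy => Prod.ext_iff.1 (hzero y hy)
  · rw [Prod.norm_mk, Prod.norm_mk]
    refine max_le ((hC y hy).trans ?_) ((hD y hy).trans ?_)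
    · gcongr
      exact le_max_left _ _
    · rw [Pi.neg_apply, norm_neg, max_comm ‖z y‖]
      gcongr
      exact le_max_right _ _

theorem eq_zero_of_turningPoint (hab : a < b) (h : IsPredatorPrey a b p c q e w z)
    (hr : IsTurningPoint a b w z r) : ∀ x ∈ Icc a b, w x = 0 ∧ z x = 0 := by
  obtain ⟨t, ht, hw, hz⟩ := h.exists_accumulation hr
  exact h.eq_zero_of_cauchy hab ht
    (eq_zero_and_hasDerivWithinAt_zero_of_frequently (h.prey.ode.differentiableWithinAt ht) hw)
    (eq_zero_and_hasDerivWithinAt_zero_of_frequently (h.predator.ode.differentiableWithinAt ht) hz)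

theorem eq_zero_of_deriv_ne_zero (hab : a < b) (h : IsPredatorPrey a b p c q e w z)
    (hf' : HasDerivWithinAt z f' (Icc a b) a) (hne : f' ≠ 0) :
    ∀ x ∈ Icc a b, w x = 0 ∧ z x = 0 := by
  obtain hneg | hpos := hne.lt_or_gt
  · obtain ⟨r, hr, hz⟩ := exists_isNodalInterval_left hab h.neg.predator.ode.continuousOn
      h.neg.predator.left_eq h.neg.predator.right_eq.le hf'.neg (neg_pos.2 hneg)
    simpa using h.neg.eq_zero_of_turningPoint hab ⟨a, le_rfl, hr, hz, h.neg.prey.left_eq.le⟩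
  · obtain ⟨r, hr, hz⟩ := exists_isNodalInterval_left hab h.predator.ode.continuousOn
      h.predator.left_eq h.predator.right_eq.le hf' hpos
    exact h.eq_zero_of_turningPoint hab ⟨a, le_rfl, hr, hz, h.prey.left_eq.le⟩

theorem eq_zero (hab : a < b) (h : IsPredatorPrey a b p c q e w z) :
    ∀ x ∈ Icc a b, w x = 0 ∧ z x = 0 := by
  have ha := left_mem_Icc.2 hab.le
  have hw := (h.prey.ode.differentiableWithinAt ha).hasDerivWithinAt
  have hz := (h.predator.ode.differentiableWithinAt ha).hasDerivWithinAt
  by_cases hz0 : derivWithin z (Icc a b) a = 0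
  · by_cases hw0 : derivWithin w (Icc a b) a = 0
    · exact h.eq_zero_of_cauchy hab ha ⟨h.prey.left_eq, hw0 ▸ hw⟩ ⟨h.predator.left_eq, hz0 ▸ hz⟩
    · intro x hx
      simpa [and_comm] using h.rotate.eq_zero_of_deriv_ne_zero hab hw hw0 x hx
  · exact h.eq_zero_of_deriv_ne_zero hab hz hz0

end IsPredatorPrey

end PredatorPrey

section SteadyState

variable {a b α β μ M K : ℝ} {m m' u u' v v' w z σ u₁ u₂ v₁ v₂ : ℝ → ℝ}

/-- A solution on `[a, b]` of the steady-state system `-u″ = u (m - α u - β v)`, `-v″ = μ (u - v)`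
with zero boundary values. The diffusion rate is absorbed into the coefficients, and the resource
`m` may depend on position. -/
structure IsSteadyState (a b α β μ : ℝ) (m u v : ℝ → ℝ) : Prop where
  ode_u : HasSecondDerivOn u (fun x => -(u x * (m x - α * u x - β * v x))) (Icc a b)
  ode_v : HasSecondDerivOn v (fun x => -(μ * (u x - v x))) (Icc a b)
  u_left : u a = 0
  u_right : u b = 0
  v_left : v a = 0
  v_right : v b = 0

namespace IsSteadyState

theorem congr (hab : a ≤ b) (h : IsSteadyState a b α β μ m u v)
    (hm : EqOn m' m (Icc a b)) (hu : EqOn u' u (Icc a b)) (hv : EqOn v' v (Icc a b)) :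
    IsSteadyState a b α β μ m' u' v' where
  ode_u := h.ode_u.congr hu fun x hx => by simp only [hm hx, hu hx, hv hx]
  ode_v := h.ode_v.congr hv fun x hx => by simp only [hu hx, hv hx]
  u_left := (hu (left_mem_Icc.2 hab)).trans h.u_left
  u_right := (hu (right_mem_Icc.2 hab)).trans h.u_right
  v_left := (hv (left_mem_Icc.2 hab)).trans h.v_left
  v_right := (hv (right_mem_Icc.2 hab)).trans h.v_right

theorem v_pos (h : IsSteadyState a b α β μ m u v) (hμ : 0 < μ) (hu : ∀ x ∈ Ioo a b, 0 < u x) :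
    ∀ x ∈ Ioo a b, 0 < v x :=
  h.ode_v.pos_of_boundary_nonneg h.v_left.ge h.v_right.ge fun x hx hvx =>
    neg_neg_of_pos (mul_pos hμ (by linarith [hu x hx]))

theorem u_le (h : IsSteadyState a b α β μ m u v) (hα : 0 < α) (hβ : 0 ≤ β) (hM : 0 ≤ M)
    (hm : ∀ x ∈ Ioo a b, m x ≤ M) (hv : ∀ x ∈ Ioo a b, 0 ≤ v x) :
    ∀ x ∈ Icc a b, u x ≤ M / α := by
  have hK : 0 ≤ M / α := by positivity
  refine h.ode_u.le_of_boundary_le (h.u_left.trans_le hK) (h.u_right.trans_le hK) fun x hx hux => ?_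
  have hMu : M < α * u x := by rwa [div_lt_iff₀' hα] at hux
  have hgrowth : m x - α * u x - β * v x < 0 := by
    linarith [hm x hx, mul_nonneg hβ (hv x hx)]
  exact (neg_pos.2 (mul_neg_of_pos_of_neg (hK.trans_lt hux) hgrowth)).le

theorem v_le (h : IsSteadyState a b α β μ m u v) (hμ : 0 ≤ μ) (hK : 0 ≤ K)
    (hu : ∀ x ∈ Ioo a b, u x ≤ K) : ∀ x ∈ Icc a b, v x ≤ K :=
  h.ode_v.le_of_boundary_le (h.v_left.trans_le hK) (h.v_right.trans_le hK) fun x hx hvx =>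
    neg_nonneg.2 (mul_nonpos_of_nonneg_of_nonpos hμ (by linarith [hu x hx]))

theorem isNodalInterval_u (hab : a < b) (h : IsSteadyState a b α β μ m u v)
    (hu : ∀ x ∈ Ioo a b, 0 < u x) : IsNodalInterval u a b :=
  ⟨hab, h.u_left, h.u_right, hu⟩

theorem isNodalInterval_v (hab : a < b) (h : IsSteadyState a b α β μ m u v) (hμ : 0 < μ)
    (hu : ∀ x ∈ Ioo a b, 0 < u x) : IsNodalInterval v a b :=
  ⟨hab, h.v_left, h.v_right, h.v_pos hμ hu⟩

theorem firstEigenvalue_lt (hab : a < b) (h : IsSteadyState a b α β μ m u v) (hα : 0 < α)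
    (hβ : 0 ≤ β) (hm : ∀ x ∈ Ioo a b, m x ≤ M) (hu : ∀ x ∈ Ioo a b, 0 < u x)
    (hv : ∀ x ∈ Ioo a b, 0 ≤ v x) : firstEigenvalue a b < M := by
  refine (h.isNodalInterval_u hab hu).firstEigenvalue_lt h.ode_u fun x hx => ?_
  have hgrowth : m x - α * u x - β * v x < M := by
    linarith [hm x hx, mul_pos hα (hu x hx), mul_nonneg hβ (hv x hx)]
  have := mul_lt_mul_of_pos_left hgrowth (hu x hx)
  linarith

theorem exists_resource_le (hab : a < b) (h : IsSteadyState a b α β μ m u v)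
    (hu : ∀ x ∈ Ioo a b, 0 < u x) :
    ∃ x ∈ Ioo a b, m x ≤ firstEigenvalue a b + α * u x + β * v x := by
  by_contra! hlt
  refine lt_irrefl (firstEigenvalue a b)
    ((h.isNodalInterval_u hab hu).lt_firstEigenvalue h.ode_u fun x hx => ?_)
  have := mul_lt_mul_of_pos_left (hlt x hx) (hu x hx)
  linarith

theorem hasStrictSupersolution_u (hab : a < b) (h : IsSteadyState a b α β μ m u v) (hα : 0 < α)
    (hu : ∀ x ∈ Ioo a b, 0 < u x) (hσ : ∀ x ∈ Ioo a b, 0 < σ x) :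
    HasStrictSupersolution a b fun x => α * σ x - (m x - α * u x - β * v x) := by
  refine ⟨u, _, h.ode_u, (h.isNodalInterval_u hab hu).nonneg, fun x hx => ?_⟩
  have := mul_pos (mul_pos hα (hσ x hx)) (hu x hx)
  linarith

theorem hasStrictSupersolution_v (hab : a < b) (h : IsSteadyState a b α β μ m u v) (hμ : 0 < μ)
    (hu : ∀ x ∈ Ioo a b, 0 < u x) : HasStrictSupersolution a b fun _ => μ := by
  refine ⟨v, _, h.ode_v, (h.isNodalInterval_v hab hμ hu).nonneg, fun x hx => ?_⟩
  have := mul_pos hμ (hu x hx)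
  linarith

/- With `σ = u` this is the linearization at `(u, v)`; with `(σ, _)` a second steady state it is the
equation for the difference of the two. -/
theorem isPredatorPrey (hab : a < b) (h : IsSteadyState a b α β μ m u v) (hα : 0 < α)
    (hβ : 0 ≤ β) (hμ : 0 < μ) (hm : ContinuousOn m (Icc a b)) (hu : ∀ x ∈ Ioo a b, 0 < u x)
    (hσ : ContinuousOn σ (Icc a b)) (hσpos : ∀ x ∈ Ioo a b, 0 < σ x)
    (hw : HasSecondDerivOn w
      (fun x => (α * σ x - (m x - α * u x - β * v x)) * w x + β * σ x * z x) (Icc a b))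
    (hz : HasSecondDerivOn z (fun x => -(μ * (w x - z x))) (Icc a b))
    (hwa : w a = 0) (hwb : w b = 0) (hza : z a = 0) (hzb : z b = 0) :
    IsPredatorPrey a b (fun x => α * σ x - (m x - α * u x - β * v x)) (fun x => β * σ x)
      (fun _ => μ) (fun _ => μ) w z where
  prey :=
    { ode := hw
      left_eq := hwa
      right_eq := hwb
      continuousOn_potential := by
        have := h.ode_u.continuousOn
        have := h.ode_v.continuousOn
        fun_prop
      continuousOn_coupling := hσ.const_mul β
      coupling_nonneg := fun x hx => mul_nonneg hβ (hσpos x hx).le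
      supersolution := h.hasStrictSupersolution_u hab hα hu hσpos }
  predator :=
    { ode := hz.congr (eqOn_refl _ _) fun x _ => by simp only [Pi.neg_apply]; ring
      left_eq := hza
      right_eq := hzb
      continuousOn_potential := continuousOn_const
      continuousOn_coupling := continuousOn_const
      coupling_nonneg := fun _ _ => hμ.le
      supersolution := h.hasStrictSupersolution_v hab hμ hu }

theorem eqOn (hab : a < b) (h₁ : IsSteadyState a b α β μ m u₁ v₁)
    (h₂ : IsSteadyState a b α β μ m u₂ v₂) (hα : 0 < α) (hβ : 0 ≤ β) (hμ : 0 < μ)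
    (hm : ContinuousOn m (Icc a b)) (hu₁ : ∀ x ∈ Ioo a b, 0 < u₁ x)
    (hu₂ : ∀ x ∈ Ioo a b, 0 < u₂ x) : EqOn u₁ u₂ (Icc a b) ∧ EqOn v₁ v₂ (Icc a b) := by
  have hpair := h₁.isPredatorPrey hab hα hβ hμ hm hu₁ h₂.ode_u.continuousOn hu₂
    ((h₁.ode_u.sub h₂.ode_u).congr (eqOn_refl _ _) fun x _ => ?_)
    ((h₁.ode_v.sub h₂.ode_v).congr (eqOn_refl _ _) fun x _ => ?_)
    (sub_eq_zero.2 (h₁.u_left.trans h₂.u_left.symm))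
    (sub_eq_zero.2 (h₁.u_right.trans h₂.u_right.symm))
    (sub_eq_zero.2 (h₁.v_left.trans h₂.v_left.symm))
    (sub_eq_zero.2 (h₁.v_right.trans h₂.v_right.symm))
  · have hzero := hpair.eq_zero hab
    exact ⟨fun x hx => sub_eq_zero.1 (hzero x hx).1, fun x hx => sub_eq_zero.1 (hzero x hx).2⟩
  · dsimp only
    ring
  · dsimp only
    ring

end IsSteadyState

theorem exists_isSteadyState_firstEigenfunction (hab : a < b) (hα : 0 < α) (hβ : 0 ≤ β)
    (hμ : 0 < μ) (hM : firstEigenvalue a b < M) :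
    ∃ A B, 0 < A ∧ IsSteadyState a b α β μ
      (fun x => firstEigenvalue a b + (M - firstEigenvalue a b) * firstEigenfunction a b x)
      (fun x => A * firstEigenfunction a b x) (fun x => B * firstEigenfunction a b x) := by
  set ω := firstEigenvalue a b
  set s := firstEigenfunction a b
  have hω : 0 < ω := firstEigenvalue_pos hab
  have hgap : 0 < M - ω := sub_pos.2 hM
  have hs := isNodalInterval_firstEigenfunction hab
  have hmul : ∀ c, HasSecondDerivOn (fun x => c * s x) (fun x => c * -(ω * s x)) (Icc a b) :=
    fun c => (hasSecondDerivOn_firstEigenfunction a b _).const_smul c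
  let D := α * (μ + ω) + β * μ
  have hD : 0 < D := by positivity
  refine ⟨(M - ω) * (μ + ω) / D, (M - ω) * μ / D, by positivity,
    (hmul _).congr (eqOn_refl _ _) fun x _ => ?_, (hmul _).congr (eqOn_refl _ _) fun x _ => ?_,
    by simp [s, hs.left_eq], by simp [s, hs.right_eq], by simp [s, hs.left_eq],
    by simp [s, hs.right_eq]⟩
  · field_simp
    simp only [D]
    ring
  · field_simp
    ring

end SteadyState

section Reaction

variable {R : Type*} [NormedCommRing R] [NormedAlgebra ℝ R]

/-- The right-hand side `(u (m - α u - β v), μ (u - v))` of the steady-state system, as a map of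
the resource `m` and the pair `(u, v)`. -/
def reaction (α β μ : ℝ) (p : R × R × R) : R × R :=
  (p.2.1 * (p.1 - α • p.2.1 - β • p.2.2), μ • (p.2.1 - p.2.2))

theorem continuous_reaction (α β μ : ℝ) : Continuous (reaction (R := R) α β μ) := by
  unfold reaction
  fun_prop

theorem norm_reaction_le (α β μ : ℝ) (p : R × R × R) :
    ‖reaction α β μ p‖ ≤
      max (‖p‖ * (‖p‖ + |α| * ‖p‖ + |β| * ‖p‖)) (|μ| * (‖p‖ + ‖p‖)) := by
  have hm : ‖p.1‖ ≤ ‖p‖ := norm_fst_le p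
  have hu : ‖p.2.1‖ ≤ ‖p‖ := (norm_fst_le p.2).trans (norm_snd_le p)
  have hv : ‖p.2.2‖ ≤ ‖p‖ := (norm_snd_le p.2).trans (norm_snd_le p)
  have hsmul : ∀ (c : ℝ) {r : R}, ‖r‖ ≤ ‖p‖ → ‖c • r‖ ≤ |c| * ‖p‖ := fun c r hr => by
    rw [norm_smul, Real.norm_eq_abs]
    gcongr
  refine max_le_max ?_ ?_
  · refine (norm_mul_le _ _).trans (mul_le_mul hu ?_ (norm_nonneg _) (norm_nonneg _))
    exact norm_sub_le_of_le (norm_sub_le_of_le hm (hsmul α hu)) (hsmul β hv)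
  · refine (norm_smul_le _ _).trans ?_
    rw [Real.norm_eq_abs]
    gcongr
    exact norm_sub_le_of_le hu hv

theorem isBounded_image_reaction (α β μ : ℝ) {s : Set (R × R × R)} (hs : Bornology.IsBounded s) :
    Bornology.IsBounded (reaction α β μ '' s) := by
  obtain ⟨r, hr⟩ := hs.exists_norm_le
  refine isBounded_iff_forall_norm_le.2
    ⟨max (r * (r + |α| * r + |β| * r)) (|μ| * (r + r)), ?_⟩
  rintro _ ⟨p, hp, rfl⟩
  have hpr := hr p hp
  have hr0 : 0 ≤ r := (norm_nonneg p).trans hpr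
  refine (norm_reaction_le α β μ p).trans ?_
  gcongr

/-- The derivative of `reaction α β μ` at `p`. -/
noncomputable def reactionDeriv (α β μ : ℝ) (p : R × R × R) : R × R × R →L[ℝ] R × R :=
  letI m := ContinuousLinearMap.fst ℝ R (R × R)
  letI u := ContinuousLinearMap.fst ℝ R R ∘L ContinuousLinearMap.snd ℝ R (R × R)
  letI v := ContinuousLinearMap.snd ℝ R R ∘L ContinuousLinearMap.snd ℝ R (R × R)
  (u p • (m - α • u - β • v) + (m - α • u - β • v) p • u).prod (μ • (u - v))

theorem reactionDeriv_zero_fst (α β μ : ℝ) (p : R × R × R) (w z : R) :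
    reactionDeriv α β μ p (0, w, z) =
      (p.2.1 * (-(α • w) - β • z) + (p.1 - α • p.2.1 - β • p.2.2) * w, μ • (w - z)) := by
  simp [reactionDeriv]

theorem hasStrictFDerivAt_reaction (α β μ : ℝ) (p : R × R × R) :
    HasStrictFDerivAt (reaction α β μ) (reactionDeriv α β μ p) p := by
  let m := ContinuousLinearMap.fst ℝ R (R × R)
  let u := ContinuousLinearMap.fst ℝ R R ∘L ContinuousLinearMap.snd ℝ R (R × R)
  let v := ContinuousLinearMap.snd ℝ R R ∘L ContinuousLinearMap.snd ℝ R (R × R)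
  exact (u.hasStrictFDerivAt.mul (m - α • u - β • v).hasStrictFDerivAt).prodMk
    (μ • (u - v)).hasStrictFDerivAt

end Reaction

section PositiveSteadyState

variable {a b α β μ : ℝ} {m u v : C(Icc a b, ℝ)}

/-- The Green operator acting on both components of a pair. -/
noncomputable def greenPair (hab : a ≤ b) :
    C(Icc a b, ℝ) × C(Icc a b, ℝ) →L[ℝ] C(Icc a b, ℝ) × C(Icc a b, ℝ) :=
  (green hab).prodMap (green hab)

theorem greenPair_eq_iff (hab : a ≤ b) {p q : C(Icc a b, ℝ) × C(Icc a b, ℝ)} :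
    greenPair hab p = q ↔ green hab p.1 = q.1 ∧ green hab p.2 = q.2 :=
  Prod.ext_iff

theorem isCompactOperator_greenPair (hab : a ≤ b) : IsCompactOperator (greenPair hab) :=
  isCompactOperator_prodMap (isCompactOperator_green hab) (isCompactOperator_green hab)

/-- The pair `(u, v)` of continuous functions on `[a, b]` solves the steady-state system with
resource `m`, and `u` is positive in the interior. -/
structure IsPositiveSteadyState (hab : a ≤ b) (α β μ : ℝ) (m u v : C(Icc a b, ℝ)) : Prop
    extends IsSteadyState a b α β μ (IccExtend hab m) (IccExtend hab u) (IccExtend hab v) where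
  u_pos : ∀ x ∈ Ioo a b, 0 < IccExtend hab u x

theorem isSteadyState_IccExtend_iff (hab : a < b) :
    IsSteadyState a b α β μ (IccExtend hab.le m) (IccExtend hab.le u) (IccExtend hab.le v) ↔
      greenPair hab.le (reaction α β μ (m, u, v)) = (u, v) := by
  rw [greenPair_eq_iff, green_eq_iff hab, green_eq_iff hab]
  exact ⟨fun ⟨hu, hv, hua, hub, hva, hvb⟩ => ⟨⟨hu, hua, hub⟩, hv, hva, hvb⟩,
    fun ⟨⟨hu, hua, hub⟩, hv, hva, hvb⟩ => ⟨hu, hv, hua, hub, hva, hvb⟩⟩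

theorem abs_mul_growth_le (hab : a ≤ b) (α β : ℝ) (m u v : C(Icc a b, ℝ)) (x : ℝ) :
    |-(IccExtend hab u x * (IccExtend hab m x - α * IccExtend hab u x - β * IccExtend hab v x))| ≤
      ‖m - α • u - β • v‖ * |IccExtend hab u x| := by
  rw [abs_neg, abs_mul, mul_comm]
  gcongr
  exact (m - α • u - β • v).norm_coe_le_norm _

namespace IsPositiveSteadyState

theorem norm_le (hab : a < b) (h : IsPositiveSteadyState hab.le α β μ m u v) (hα : 0 < α)
    (hβ : 0 ≤ β) (hμ : 0 < μ) : ‖(u, v)‖ ≤ ‖m‖ / α := by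
  have hK : 0 ≤ ‖m‖ / α := by positivity
  have hu := h.isNodalInterval_u hab h.u_pos
  have hv := h.isNodalInterval_v hab hμ h.u_pos
  have hule := h.u_le hα hβ (norm_nonneg m) (fun x _ => m.apply_le_norm _)
    fun x hx => (hv.pos x hx).le
  have hvle := h.v_le hμ.le hK fun x hx => hule x (Ioo_subset_Icc_self hx)
  have hnorm : ∀ {f : C(Icc a b, ℝ)}, IsNodalInterval (IccExtend hab.le f) a b →
      (∀ x ∈ Icc a b, IccExtend hab.le f x ≤ ‖m‖ / α) → ‖f‖ ≤ ‖m‖ / α := fun {f} hf hle => by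
    refine (ContinuousMap.norm_le f hK).2 fun x => ?_
    have h0 := hf.nonneg x x.2
    have h1 := hle x x.2
    rw [IccExtend_val] at h0 h1
    rwa [Real.norm_of_nonneg h0]
  exact norm_prod_le_iff.2 ⟨hnorm hu hule, hnorm hv hvle⟩

theorem eq_zero_of_linearization (hab : a < b) (h : IsPositiveSteadyState hab.le α β μ m u v)
    (hα : 0 < α) (hβ : 0 ≤ β) (hμ : 0 < μ) {W : C(Icc a b, ℝ) × C(Icc a b, ℝ)}
    (hW : greenPair hab.le (reactionDeriv α β μ (m, u, v) (0, W)) = W) : W = 0 := by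
  obtain ⟨w, z⟩ := W
  rw [reactionDeriv_zero_fst, greenPair_eq_iff, green_eq_iff hab, green_eq_iff hab] at hW
  obtain ⟨⟨hw, hwa, hwb⟩, hz, hza, hzb⟩ := hW
  have hzero := (h.isPredatorPrey hab hα hβ hμ m.continuous.Icc_extend'.continuousOn h.u_pos
    h.ode_u.continuousOn h.u_pos (hw.congr (eqOn_refl _ _) fun x _ => ?_)
    (hz.congr (eqOn_refl _ _) fun x _ => ?_) hwa hwb hza hzb).eq_zero hab
  · refine Prod.ext (ContinuousMap.ext fun x => ?_) (ContinuousMap.ext fun x => ?_)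
    · exact (IccExtend_val hab.le w x).symm.trans (hzero x x.2).1
    · exact (IccExtend_val hab.le z x).symm.trans (hzero x x.2).2
  · simp only [IccExtend, Function.comp_apply, Pi.neg_apply, ContinuousMap.add_apply,
      ContinuousMap.mul_apply, ContinuousMap.sub_apply, ContinuousMap.neg_apply,
      ContinuousMap.smul_apply, smul_eq_mul]
    ring
  · rfl

theorem eventually (hab : a < b) (h : IsPositiveSteadyState hab.le α β μ m u v) (hα : 0 < α)
    (hβ : 0 ≤ β) (hμ : 0 < μ) :
    ∀ᶠ m' in 𝓝 m, ∃ u' v', IsPositiveSteadyState hab.le α β μ m' u' v' := by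
  let G := greenPair hab.le
  obtain ⟨ψ, hψ, hfix⟩ := exists_tendsto_fixedPoint_of_isCompactOperator
    (G.hasStrictFDerivAt.comp _ (hasStrictFDerivAt_reaction α β μ (m, u, v)))
    ((isSteadyState_IccExtend_iff hab).1 h.toIsSteadyState)
    ((isCompactOperator_greenPair hab.le).comp_clm
      (reactionDeriv α β μ (m, u, v) ∘L .inr ℝ C(Icc a b, ℝ) _))
    fun W hW => h.eq_zero_of_linearization hab hα hβ hμ hW
  obtain ⟨η, hη, hpos⟩ := exists_forall_pos_of_near hab h.ode_u.continuousOn h.u_pos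
    (‖m - α • u - β • v‖ + 1)
  have hu : ∀ᶠ m' in 𝓝 m, ‖(ψ m').1 - u‖ < η :=
    (continuous_fst.tendsto _ |>.comp hψ).eventually (Metric.ball_mem_nhds _ hη) |>.mono
      fun m' hm' => by rwa [← dist_eq_norm]
  have hgrowth : ∀ᶠ m' in 𝓝 m, ‖m' - α • (ψ m').1 - β • (ψ m').2‖ < ‖m - α • u - β • v‖ + 1 := by
    have hcont : Continuous fun p : C(Icc a b, ℝ) × C(Icc a b, ℝ) × C(Icc a b, ℝ) =>
      ‖p.1 - α • p.2.1 - β • p.2.2‖ := by fun_prop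
    exact ((hcont.tendsto (m, u, v)).comp (tendsto_id.prodMk_nhds hψ)).eventually_lt_const
      (lt_add_one _)
  filter_upwards [hfix, hu, hgrowth] with m' hfix' hu' hgrowth'
  have hsol := (isSteadyState_IccExtend_iff hab (v := (ψ m').2)).2 hfix'
  refine ⟨_, _, hsol, hpos _ _ hsol.ode_u hsol.u_left hsol.u_right (fun x _ => ?_) fun x _ => ?_⟩
  · refine (abs_mul_growth_le hab.le α β m' _ _ x).trans ?_
    gcongr
  · exact (((ψ m').1 - u).norm_coe_le_norm (projIcc a b hab.le x)).trans_lt hu'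

end IsPositiveSteadyState

end PositiveSteadyState

section Continuation

variable {a b α β μ M : ℝ} {m₀ u₀ v₀ : C(Icc a b, ℝ)} {m u v : ℕ → C(Icc a b, ℝ)}

namespace IsPositiveSteadyState

theorem exists_subseq_tendsto (hab : a < b)
    (h : ∀ n, IsPositiveSteadyState hab.le α β μ (m n) (u n) (v n)) (hα : 0 < α) (hβ : 0 ≤ β)
    (hμ : 0 < μ) (hm : Tendsto m atTop (𝓝 m₀)) :
    ∃ u₀ v₀ : C(Icc a b, ℝ), IsSteadyState a b α β μ (IccExtend hab.le m₀) (IccExtend hab.le u₀)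
      (IccExtend hab.le v₀) ∧ ∃ φ : ℕ → ℕ, StrictMono φ ∧
        Tendsto (u ∘ φ) atTop (𝓝 u₀) ∧ Tendsto (v ∘ φ) atTop (𝓝 v₀) := by
  obtain ⟨r, hr⟩ := (Metric.isBounded_range_of_tendsto m hm).exists_norm_le
  have hbdd : Bornology.IsBounded (range fun n => (m n, u n, v n)) := by
    refine isBounded_iff_forall_norm_le.2 ⟨max r (r / α), ?_⟩
    rintro _ ⟨n, rfl⟩
    have hmr : ‖m n‖ ≤ r := hr _ (mem_range_self n)
    exact max_le_max hmr (((h n).norm_le hab hα hβ hμ).trans (by gcongr))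
  obtain ⟨⟨u₀, v₀⟩, hfix, φ, hφ, hlim⟩ := exists_subseq_tendsto_fixedPoint
    (isCompactOperator_greenPair hab.le) (continuous_reaction α β μ) hm
    (x := fun n => (u n, v n)) (fun n => (isSteadyState_IccExtend_iff hab).1 (h n).toIsSteadyState)
    ((isBounded_image_reaction α β μ hbdd).subset (range_subset_iff.2 fun n =>
      mem_image_of_mem _ (mem_range_self n)))
  exact ⟨u₀, v₀, (isSteadyState_IccExtend_iff hab).2 hfix, φ, hφ,
    (continuous_fst.tendsto _).comp hlim, (continuous_snd.tendsto _).comp hlim⟩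

theorem exists_resource_le_of_tendsto (hab : a < b)
    (h : ∀ n, IsPositiveSteadyState hab.le α β μ (m n) (u n) (v n))
    (hm : Tendsto m atTop (𝓝 m₀)) (hu : Tendsto u atTop (𝓝 u₀)) (hv : Tendsto v atTop (𝓝 v₀)) :
    ∃ x, m₀ x ≤ firstEigenvalue a b + α * u₀ x + β * v₀ x := by
  by_contra! hlt
  let O : Set C(Icc a b, ℝ) := {g | MapsTo g univ (Ioi (firstEigenvalue a b))}
  have hopen : IsOpen O :=
    ContinuousMap.isOpen_setOfPred_mapsTo isCompact_univ isOpen_Ioi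
  have hlim : Tendsto (fun n => m n - α • u n - β • v n) atTop (𝓝 (m₀ - α • u₀ - β • v₀)) :=
    (hm.sub (hu.const_smul α)).sub (hv.const_smul β)
  have hmem : m₀ - α • u₀ - β • v₀ ∈ O := fun x _ => by
    change _ < m₀ x - α * u₀ x - β * v₀ x
    linarith [hlt x]
  obtain ⟨n, hn⟩ := (hlim.eventually_mem (hopen.mem_nhds hmem)).exists
  obtain ⟨x, -, hx⟩ := (h n).exists_resource_le hab (h n).u_pos
  have hgrowth : firstEigenvalue a b < IccExtend hab.le (m n) x - α * IccExtend hab.le (u n) x -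
      β * IccExtend hab.le (v n) x := hn (mem_univ (projIcc a b hab.le x))
  linarith

end IsPositiveSteadyState

theorem IsSteadyState.isPositiveSteadyState (hab : a < b)
    (h : IsSteadyState a b α β μ (IccExtend hab.le m₀) (IccExtend hab.le u₀)
      (IccExtend hab.le v₀)) (hμ : 0 ≤ μ) (hu : ∀ x, 0 ≤ u₀ x) (hv : ∀ x, 0 ≤ v₀ x)
    (hne : ∃ x, α * u₀ x + β * v₀ x ≠ 0) : IsPositiveSteadyState hab.le α β μ m₀ u₀ v₀ := by
  have hu₀ : ∃ x, u₀ x ≠ 0 := by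
    by_contra! hzero
    have hvle := h.v_le hμ le_rfl fun x _ => (hzero (projIcc a b hab.le x)).le
    obtain ⟨x, hx⟩ := hne
    have hvx : v₀ x ≤ 0 := by simpa only [IccExtend_val] using hvle x x.2
    simp [hzero x, (hvx.antisymm (hv x))] at hx
  obtain ⟨y, hy⟩ := hu₀
  exact ⟨h, h.ode_u.pos_of_nonneg (fun x _ => abs_mul_growth_le hab.le α β m₀ u₀ v₀ x)
    (fun x _ => hu _) y.2 (by rwa [IccExtend_val])⟩

/-- The resources for which the steady-state system has a positive solution. -/
def sustainingResources (hab : a ≤ b) (α β μ : ℝ) : Set C(Icc a b, ℝ) :=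
  {m | ∃ u v : C(Icc a b, ℝ), IsPositiveSteadyState hab α β μ m u v}

theorem isOpen_sustainingResources (hab : a < b) (hα : 0 < α) (hβ : 0 ≤ β) (hμ : 0 < μ) :
    IsOpen (sustainingResources hab.le α β μ) :=
  isOpen_iff_mem_nhds.2 fun _ ⟨_, _, h⟩ => h.eventually hab hα hβ hμ

theorem mem_sustainingResources_of_mem_closure (hab : a < b) (hα : 0 < α) (hβ : 0 ≤ β) (hμ : 0 < μ)
    (hm₀ : m₀ ∈ closure (sustainingResources hab.le α β μ))
    (hgap : ∀ x, firstEigenvalue a b < m₀ x) : m₀ ∈ sustainingResources hab.le α β μ := by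
  obtain ⟨m, hm, hlim⟩ := mem_closure_iff_seq_limit.1 hm₀
  choose u v h using hm
  obtain ⟨u₀, v₀, h₀, φ, hφ, hu, hv⟩ :=
    IsPositiveSteadyState.exists_subseq_tendsto hab h hα hβ hμ hlim
  obtain ⟨x, hx⟩ := IsPositiveSteadyState.exists_resource_le_of_tendsto hab (fun n => h (φ n))
    (hlim.comp hφ.tendsto_atTop) hu hv
  have hnonneg : ∀ {f : ℕ → C(Icc a b, ℝ)} {f₀ : C(Icc a b, ℝ)}, Tendsto f atTop (𝓝 f₀) →
      (∀ n, IsNodalInterval (IccExtend hab.le (f n)) a b) → ∀ y, 0 ≤ f₀ y :=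
    fun {f f₀} hf hpos y => by
      refine ge_of_tendsto' (((continuous_eval_const y).tendsto f₀).comp hf) fun n => ?_
      exact ((hpos n).nonneg y y.2).trans_eq (IccExtend_val hab.le (f n) y)
  refine ⟨u₀, v₀, h₀.isPositiveSteadyState hab hμ.le
    (hnonneg hu fun n => (h (φ n)).isNodalInterval_u hab (h (φ n)).u_pos)
    (hnonneg hv fun n => (h (φ n)).isNodalInterval_v hab hμ (h (φ n)).u_pos)
    ⟨x, fun hzero => (hgap x).not_ge ?_⟩⟩
  linarith

theorem const_mem_sustainingResources (hab : a < b) (hα : 0 < α) (hβ : 0 ≤ β) (hμ : 0 < μ)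
    (hM : firstEigenvalue a b < M) :
    ContinuousMap.const _ M ∈ sustainingResources hab.le α β μ := by
  set ω := firstEigenvalue a b
  let s : C(Icc a b, ℝ) := ⟨fun x => firstEigenfunction a b x, by
    unfold firstEigenfunction
    fun_prop⟩
  have hs := isNodalInterval_firstEigenfunction hab
  have hs0 : ∀ x, 0 ≤ s x := fun x => hs.nonneg x x.2
  let m₁ : C(Icc a b, ℝ) := .const _ ω + (M - ω) • s
  have hm₁ : m₁ ∈ sustainingResources hab.le α β μ := by
    obtain ⟨A, B, hA, h⟩ := exists_isSteadyState_firstEigenfunction hab hα hβ hμ hM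
    exact ⟨A • s, B • s,
      h.congr hab.le (fun x hx => IccExtend_of_mem hab.le _ hx)
        (fun x hx => IccExtend_of_mem hab.le _ hx) fun x hx => IccExtend_of_mem hab.le _ hx,
      fun x hx => (mul_pos hA (hs.pos x hx)).trans_eq
        (IccExtend_of_mem hab.le (A • s) (Ioo_subset_Icc_self hx)).symm⟩
  have hpath : segment ℝ m₁ (.const _ M) ⊆ sustainingResources hab.le α β μ := by
    refine (convex_segment _ _).isPreconnected.subset_of_closure_inter_subset
      (isOpen_sustainingResources hab hα hβ hμ) ⟨m₁, left_mem_segment ℝ _ _, hm₁⟩ ?_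
    rintro _ ⟨hcl, c, d, hc, hd, hcd, rfl⟩
    obtain rfl | hd := hd.eq_or_lt
    · simpa [show c = 1 by linarith] using hm₁
    refine mem_sustainingResources_of_mem_closure hab hα hβ hμ hcl fun x => ?_
    have hgap : 0 < (M - ω) * (c * s x + d) :=
      mul_pos (sub_pos.2 hM) (add_pos_of_nonneg_of_pos (mul_nonneg hc (hs0 x)) hd)
    calc ω < ω + (M - ω) * (c * s x + d) := lt_add_of_pos_right _ hgap
      _ = (c • m₁ + d • ContinuousMap.const _ M : C(Icc a b, ℝ)) x := by
        change _ = c * (ω + (M - ω) * s x) + d * M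
        linear_combination (-ω) * hcd
  exact hpath (right_mem_segment ℝ _ _)

end Continuation

section Rescaling

variable {L d τ κ A B : ℝ} {u v : ℝ → ℝ}

theorem isNonnegLogSol_iff (hL : 0 < L) (hd : 0 < d) :
    IsNonnegLogSol L d τ κ A B u v ↔
      IsSteadyState 0 L (κ * A / d) (κ * B / d) (1 / τ / d) (fun _ => κ / d) u v ∧
        (∀ x ∈ Ioo 0 L, 0 ≤ u x) ∧ ∀ x ∈ Ioo 0 L, 0 ≤ v x := by
  constructor
  · rintro ⟨hu2, hv2, hu, hv, hode_u, hode_v, hua, hub, hva, hvb⟩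
    have := hu2.continuousOn
    have := hv2.continuousOn
    refine ⟨⟨.of_contDiffOn hL hu2 (by fun_prop) fun x hx => ?_,
      .of_contDiffOn hL hv2 (by fun_prop) fun x hx => ?_, hua, hub, hva, hvb⟩, hu, hv⟩
    · field_simp
      linear_combination -hode_u x hx
    · rw [div_mul_eq_mul_div, ← neg_div, eq_div_iff hd.ne']
      linear_combination -hode_v x hx
  · rintro ⟨h, hu, hv⟩
    have := h.ode_u.continuousOn
    have := h.ode_v.continuousOn
    refine ⟨h.ode_u.contDiffOn hL (by fun_prop), h.ode_v.contDiffOn hL (by fun_prop), hu, hv,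
      fun x hx => ?_, fun x hx => ?_, h.u_left, h.u_right, h.v_left, h.v_right⟩
    · rw [h.ode_u.deriv_deriv (Icc_mem_nhds hx.1 hx.2)]
      field_simp
    · rw [h.ode_v.deriv_deriv (Icc_mem_nhds hx.1 hx.2)]
      field_simp

theorem isPosLogSol_iff (hL : 0 < L) (hd : 0 < d) (hτ : 0 < τ) :
    IsPosLogSol L d τ κ A B u v ↔
      IsSteadyState 0 L (κ * A / d) (κ * B / d) (1 / τ / d) (fun _ => κ / d) u v ∧
        ∀ x ∈ Ioo 0 L, 0 < u x := by
  rw [IsPosLogSol, isNonnegLogSol_iff hL hd]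
  refine ⟨fun ⟨⟨h, _⟩, hu, _⟩ => ⟨h, hu⟩, fun ⟨h, hu⟩ => ?_⟩
  have hv := h.v_pos (by positivity) hu
  exact ⟨⟨h, fun x hx => (hu x hx).le, fun x hx => (hv x hx).le⟩, hu, hv⟩

theorem firstEigenvalue_lt_div_iff (hL : 0 < L) (hd : 0 < d) :
    firstEigenvalue 0 L < κ / d ↔ d < κ * L ^ 2 / π ^ 2 := by
  rw [firstEigenvalue, sub_zero, div_pow, div_lt_div_iff₀ (by positivity) hd,
    lt_div_iff₀ (by positivity), mul_comm]

end Rescaling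

end LogisticSteadyState

open LogisticSteadyState

/-- the 1D logistic steady state system with d* = κL²/π² satisfies:
(i) any nonnegative classical solution has 0 ≤ u, v ≤ 1/A on (0, L);
(ii) for 0 < d < d* there is exactly one positive classical solution;
(iii) for d ≥ d* there is no positive classical solution. -/
theorem stmt15 (L τ κ A B : ℝ) (hL : 0 < L) (hτ : 0 < τ)
    (hκ : 0 < κ) (hA : 0 < A) (hB : 0 < B) :
    -- (i)
    (∀ d : ℝ, 0 < d → ∀ u v : ℝ → ℝ, IsNonnegLogSol L d τ κ A B u v →
      ∀ x ∈ Ioo 0 L, 0 ≤ u x ∧ u x ≤ 1 / A ∧ 0 ≤ v x ∧ v x ≤ 1 / A) ∧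
    -- (ii)
    (∀ d : ℝ, 0 < d → d < κ * L ^ 2 / π ^ 2 →
      ∃ u v : ℝ → ℝ, IsPosLogSol L d τ κ A B u v ∧
        ∀ u' v' : ℝ → ℝ, IsPosLogSol L d τ κ A B u' v' →
          (EqOn u' u (Icc 0 L) ∧ EqOn v' v (Icc 0 L))) ∧
    -- (iii)
    (∀ d : ℝ, κ * L ^ 2 / π ^ 2 ≤ d →
      ¬ ∃ u v : ℝ → ℝ, IsPosLogSol L d τ κ A B u v) := by
  refine ⟨fun d hd u v h x hx => ?_, fun d hd hlt => ?_, fun d hle ⟨u, v, h⟩ => ?_⟩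
  · obtain ⟨hsol, hu, hv⟩ := (isNonnegLogSol_iff hL hd).1 h
    have hbound : κ / d / (κ * A / d) = 1 / A := by field_simp
    have hule := hsol.u_le (by positivity) (by positivity) (by positivity) (fun _ _ => le_rfl) hv
    rw [hbound] at hule
    have hvle := hsol.v_le (by positivity) (by positivity) fun y hy =>
      hule y (Ioo_subset_Icc_self hy)
    have hx' := Ioo_subset_Icc_self hx
    exact ⟨hu x hx, hule x hx', hv x hx, hvle x hx'⟩
  · obtain ⟨u, v, hsol, hu⟩ := const_mem_sustainingResources (α := κ * A / d) (β := κ * B / d)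
      (μ := 1 / τ / d) hL (by positivity) (by positivity) (by positivity)
      ((firstEigenvalue_lt_div_iff hL hd).2 hlt)
    refine ⟨_, _, (isPosLogSol_iff hL hd hτ).2 ⟨hsol, hu⟩, fun u' v' h' => ?_⟩
    obtain ⟨hsol', hu'⟩ := (isPosLogSol_iff hL hd hτ).1 h'
    exact hsol'.eqOn hL hsol (by positivity) (by positivity) (by positivity) continuousOn_const
      hu' hu
  · have hd : 0 < d := lt_of_lt_of_le (by positivity) hle
    obtain ⟨hsol, -, hv⟩ := (isNonnegLogSol_iff hL hd).1 h.1
    exact ((firstEigenvalue_lt_div_iff hL hd).1 (hsol.firstEigenvalue_lt hL (by positivity)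
      (by positivity) (fun _ _ => le_rfl) h.2.1 hv)).not_ge hle
end

section
/- Let χ, ϑ, A, d, τ > 0 and let Ω ⊂ ℝⁿ be a bounded open set. Consider the Monod-type steady-state system dΔu(x) − χu(x) + ϑ v(x)/(A + v(x)) = 0 and dΔv(x) + (1/τ)(u(x) − v(x)) = 0 for x ∈ Ω, with u = v = 0 on ∂Ω. Then: (i) any nonnegative classical solution satisfies 0 ≤ u(x) ≤ ϑ/χ and 0 ≤ v(x) ≤ ϑ/χ for all x ∈ Ω; (ii) the system has at most one positive classical solution. -/
open Set

/-- The Laplacian of `f` at `x`: the trace of the second derivative. -/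
noncomputable def Lap {n : ℕ} (f : EuclideanSpace ℝ (Fin n) → ℝ)
    (x : EuclideanSpace ℝ (Fin n)) : ℝ :=
  ∑ i : Fin n, iteratedFDeriv ℝ 2 f x ![EuclideanSpace.single i (1 : ℝ), EuclideanSpace.single i 1]

/-- A nonnegative classical solution of the Monod-type steady state system
dΔu − χu + ϑv/(A + v) = 0, dΔv + (1/τ)(u − v) = 0 in Ω, u = v = 0 on ∂Ω. -/
def IsNonnegMonodSol {n : ℕ} (Ω : Set (EuclideanSpace ℝ (Fin n)))
    (χ ϑ A d τ : ℝ) (u v : EuclideanSpace ℝ (Fin n) → ℝ) : Prop :=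
  ContinuousOn u (closure Ω) ∧ ContinuousOn v (closure Ω) ∧
  ContDiffOn ℝ 2 u Ω ∧ ContDiffOn ℝ 2 v Ω ∧
  (∀ x ∈ frontier Ω, u x = 0) ∧ (∀ x ∈ frontier Ω, v x = 0) ∧
  (∀ x ∈ Ω, 0 ≤ u x) ∧ (∀ x ∈ Ω, 0 ≤ v x) ∧
  (∀ x ∈ Ω, d * Lap u x - χ * u x + ϑ * v x / (A + v x) = 0) ∧
  (∀ x ∈ Ω, d * Lap v x + (1 / τ) * (u x - v x) = 0)

/-- A positive classical solution of the Monod-type steady state system. -/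
def IsPosMonodSol {n : ℕ} (Ω : Set (EuclideanSpace ℝ (Fin n)))
    (χ ϑ A d τ : ℝ) (u v : EuclideanSpace ℝ (Fin n) → ℝ) : Prop :=
  IsNonnegMonodSol Ω χ ϑ A d τ u v ∧ (∀ x ∈ Ω, 0 < u x) ∧ (∀ x ∈ Ω, 0 < v x)

/-!
The bounds (i) come from looking at an interior maximum of `u`, then of `v`.

For (ii), the difference of two positive solutions solves a linear cooperative system whose
nonlinear entry is a difference quotient of the saturation term. Since `s ↦ ϑ s / (A + s)` is
sublinear, the first solution is a strict positive supersolution `φ` of that system. Comparing the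
difference with the least multiple `t φ` lying above it, the touching point contradicts strictness,
so `t = 0` and the two solutions are ordered; by symmetry they coincide.

The boundary of `Ω` is arbitrary, so Hopf's lemma cannot provide the multiple `t`. It is replaced by
a maximum principle in open sets of small volume: a compactly supported `f ≥ 0` with
`Δ f ≥ -c f` satisfies a Gaussian mean value inequality, which at a maximum of `f` forces the
support of `f` to have a volume bounded below in terms of `c`. This is applied to the cube of the
positive part of the largest component, the cube being smooth enough to have a Laplacian.
-/

open Filter MeasureTheory Topology
open scoped InnerProductSpace Laplacian RealInnerProductSpace

theorem deriv_deriv_nonpos_of_isLocalMax {g : ℝ → ℝ} {a : ℝ} (hmax : IsLocalMax g a)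
    (hg : ContinuousAt g a) : deriv (deriv g) a ≤ 0 := by
  by_contra! hpos
  have hmin : IsLocalMin g a := isLocalMin_of_deriv_deriv_pos hpos hmax.deriv_eq_zero hg
  have hconst : g =ᶠ[𝓝 a] fun _ => g a := by
    filter_upwards [hmax, hmin] with s hle hge using le_antisymm hle hge
  exact hpos.ne' (by simpa using hconst.deriv.deriv_eq)

section MaxZeroPow

theorem hasDerivAt_max_zero_pow (k : ℕ) (t : ℝ) :
    HasDerivAt (fun s : ℝ => max s 0 ^ (k + 2)) ((k + 2) * max t 0 ^ (k + 1)) t := by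
  rcases lt_trichotomy t 0 with ht | rfl | ht
  · have h : (fun s : ℝ => max s 0 ^ (k + 2)) =ᶠ[𝓝 t] fun _ => 0 := by
      filter_upwards [eventually_lt_nhds ht] with s hs
      simp [max_eq_right hs.le]
    simpa [max_eq_right ht.le] using (hasDerivAt_const t (0 : ℝ)).congr_of_eventuallyEq h
  · have hO : (fun s : ℝ => max s 0 ^ (k + 2)) =O[𝓝 0] fun s => s ^ (k + 2) := by
      refine (Asymptotics.IsBigO.of_bound 1 (Eventually.of_forall fun s => ?_)).pow (k + 2)
      rcases le_total s 0 with hs | hs <;> simp [hs]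
    have ho := hO.trans_isLittleO (Asymptotics.isLittleO_pow_id (𝕜 := ℝ) (n := k + 2) (by lia))
    simpa [hasDerivAt_iff_isLittleO] using ho
  · have h : (fun s : ℝ => max s 0 ^ (k + 2)) =ᶠ[𝓝 t] fun s => s ^ (k + 2) := by
      filter_upwards [eventually_gt_nhds ht] with s hs
      simp [max_eq_left hs.le]
    simpa [max_eq_left ht.le] using (hasDerivAt_pow (k + 2) t).congr_of_eventuallyEq h

theorem deriv_max_zero_pow (k : ℕ) :
    deriv (fun s : ℝ => max s 0 ^ (k + 2)) = fun t : ℝ => (k + 2) * max t 0 ^ (k + 1) :=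
  funext fun t => (hasDerivAt_max_zero_pow k t).deriv

theorem contDiff_max_zero_pow_succ (k : ℕ) : ContDiff ℝ k fun s : ℝ => max s 0 ^ (k + 1) := by
  induction k with
  | zero => exact contDiff_zero.2 (by fun_prop)
  | succ k ih =>
    rw [Nat.cast_succ, contDiff_succ_iff_deriv, deriv_max_zero_pow]
    exact ⟨fun t => (hasDerivAt_max_zero_pow k t).differentiableAt, by simp,
      contDiff_const.mul ih⟩

end MaxZeroPow

section Laplacian

variable {E : Type*} [NormedAddCommGroup E] [InnerProductSpace ℝ E]
  {f : E → ℝ} {x : E} {Ω : Set E}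

theorem differentiableAt_fderiv_of_contDiffAt_two (hf : ContDiffAt ℝ 2 f x) :
    DifferentiableAt ℝ (fderiv ℝ f) x :=
  (hf.fderiv_right (m := 1) le_rfl).differentiableAt one_ne_zero

theorem eventually_differentiableAt_of_contDiffAt_two (hf : ContDiffAt ℝ 2 f x) :
    ∀ᶠ y in 𝓝 x, DifferentiableAt ℝ f y := by
  filter_upwards [hf.eventually (by simp)] with y hy using hy.differentiableAt two_ne_zero

theorem hasFDerivAt_fderiv_apply_of_contDiffAt_two (hf : ContDiffAt ℝ 2 f x) (e : E) :
    HasFDerivAt (fun y => fderiv ℝ f y e) ((fderiv ℝ (fderiv ℝ f) x).flip e) x := by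
  simpa using (differentiableAt_fderiv_of_contDiffAt_two hf).hasFDerivAt.clm_apply
    (hasFDerivAt_const e x)

theorem hasDerivAt_add_smul (x e : E) (s : ℝ) : HasDerivAt (fun t : ℝ => x + t • e) e s := by
  simpa using ((hasDerivAt_id s).smul_const e).const_add x

theorem deriv_deriv_comp_add_smul (hf : ContDiffAt ℝ 2 f x) (e : E) :
    deriv (deriv fun t : ℝ => f (x + t • e)) 0 = fderiv ℝ (fderiv ℝ f) x e e := by
  have hline : Tendsto (fun t : ℝ => x + t • e) (𝓝 0) (𝓝 x) := by
    simpa using (hasDerivAt_add_smul x e 0).continuousAt.tendsto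
  have hfst : deriv (fun t : ℝ => f (x + t • e)) =ᶠ[𝓝 0] fun t => fderiv ℝ f (x + t • e) e := by
    filter_upwards [hline.eventually (eventually_differentiableAt_of_contDiffAt_two hf)] with t ht
    exact (ht.hasFDerivAt.comp_hasDerivAt t (hasDerivAt_add_smul x e t)).deriv
  have hsnd : HasFDerivAt (fun y => fderiv ℝ f y e) ((fderiv ℝ (fderiv ℝ f) x).flip e)
      (x + (0 : ℝ) • e) := by
    simpa using hasFDerivAt_fderiv_apply_of_contDiffAt_two hf e
  rw [hfst.deriv_eq]
  exact (hsnd.comp_hasDerivAt 0 (hasDerivAt_add_smul x e 0)).deriv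

variable [FiniteDimensional ℝ E]

theorem laplacian_eq_sum_fderiv_fderiv (f : E → ℝ) (x : E) :
    Δ f x = ∑ i, fderiv ℝ (fderiv ℝ f) x (stdOrthonormalBasis ℝ E i)
      (stdOrthonormalBasis ℝ E i) := by
  simp [InnerProductSpace.laplacian_eq_iteratedFDeriv_stdOrthonormalBasis,
    iteratedFDeriv_two_apply]

theorem laplacian_nonpos_of_isLocalMax (hf : ContDiffAt ℝ 2 f x) (hmax : IsLocalMax f x) :
    Δ f x ≤ 0 := by
  rw [laplacian_eq_sum_fderiv_fderiv]
  refine Finset.sum_nonpos fun i _ => ?_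
  set e := stdOrthonormalBasis ℝ E i
  have hline : ContinuousAt (fun t : ℝ => x + t • e) 0 := by fun_prop
  rw [← deriv_deriv_comp_add_smul hf e]
  refine deriv_deriv_nonpos_of_isLocalMax ?_
    (ContinuousAt.comp_of_eq hf.continuousAt hline (by simp))
  exact IsLocalMax.comp_continuous (g := fun t : ℝ => x + t • e) (by simpa using hmax) hline

theorem laplacian_nonpos_of_isMaxOn (hΩ : IsOpen Ω) (hf : ContDiffOn ℝ 2 f Ω) (hx : x ∈ Ω)
    (hmax : IsMaxOn f Ω x) : Δ f x ≤ 0 :=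
  laplacian_nonpos_of_isLocalMax (hf.contDiffAt (hΩ.mem_nhds hx))
    (hmax.isLocalMax (hΩ.mem_nhds hx))

theorem le_of_frontier_le_of_laplacian_nonpos_imp_le (hΩ : IsOpen Ω)
    (hΩb : Bornology.IsBounded Ω) (hfc : ContinuousOn f (closure Ω)) (hf : ContDiffOn ℝ 2 f Ω)
    {B : ℝ} (hfr : ∀ y ∈ frontier Ω, f y ≤ B) (hB : ∀ y ∈ Ω, Δ f y ≤ 0 → f y ≤ B) (hx : x ∈ Ω) :
    f x ≤ B := by
  obtain ⟨x₀, hx₀, hmax⟩ := hΩb.isCompact_closure.exists_isMaxOn ⟨x, subset_closure hx⟩ hfc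
  refine (hmax (subset_closure hx)).trans ?_
  by_cases hx₀Ω : x₀ ∈ Ω
  · exact hB x₀ hx₀Ω
      (laplacian_nonpos_of_isMaxOn hΩ hf hx₀Ω (hmax.on_subset subset_closure))
  · exact hfr x₀ ⟨hx₀, by rwa [hΩ.interior_eq]⟩

theorem deriv_mul_laplacian_le_laplacian_comp {ψ : ℝ → ℝ} (hψ : ContDiff ℝ 2 ψ)
    (hconvex : 0 ≤ deriv (deriv ψ) (f x)) (hf : ContDiffAt ℝ 2 f x) :
    deriv ψ (f x) * Δ f x ≤ Δ (ψ ∘ f) x := by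
  have hψ' : Differentiable ℝ (deriv ψ) :=
    ((contDiff_succ_iff_deriv (n := 1)).1 hψ).2.2.differentiable one_ne_zero
  have hfst : fderiv ℝ (ψ ∘ f) =ᶠ[𝓝 x] fun y => deriv ψ (f y) • fderiv ℝ f y := by
    filter_upwards [eventually_differentiableAt_of_contDiffAt_two hf] with y hy
    exact ((hψ.differentiable two_ne_zero _).hasDerivAt.comp_hasFDerivAt y hy.hasFDerivAt).fderiv
  have hcoeff : HasFDerivAt (fun y => deriv ψ (f y)) (deriv (deriv ψ) (f x) • fderiv ℝ f x) x :=
    (hψ' (f x)).hasDerivAt.comp_hasFDerivAt x (hf.differentiableAt two_ne_zero).hasFDerivAt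
  have hsnd := hcoeff.fun_smul (differentiableAt_fderiv_of_contDiffAt_two hf).hasFDerivAt
  rw [laplacian_eq_sum_fderiv_fderiv, laplacian_eq_sum_fderiv_fderiv, hfst.fderiv_eq,
    hsnd.fderiv, Finset.mul_sum]
  refine Finset.sum_le_sum fun i _ => ?_
  set e := stdOrthonormalBasis ℝ E i
  have hsq : 0 ≤ deriv (deriv ψ) (f x) * fderiv ℝ f x e * fderiv ℝ f x e := by
    rw [mul_assoc]
    exact mul_nonneg hconvex (mul_self_nonneg _)
  simpa using hsq

end Laplacian

section Gaussian

variable {E : Type*} [NormedAddCommGroup E] {b : ℝ}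

/-- The unnormalised Gaussian density `exp (-b‖y‖²)` on `E`, the weight of the mean value
inequality below. -/
noncomputable def gaussianWeight (b : ℝ) (y : E) : ℝ := Real.exp (-b * ‖y‖ ^ 2)

theorem gaussianWeight_pos (b : ℝ) (y : E) : 0 < gaussianWeight b y := Real.exp_pos _

theorem gaussianWeight_le_one (hb : 0 ≤ b) (y : E) : gaussianWeight b y ≤ 1 :=
  Real.exp_le_one_iff.2 (mul_nonpos_of_nonpos_of_nonneg (neg_nonpos.2 hb) (sq_nonneg _))

@[fun_prop]
theorem continuous_gaussianWeight (b : ℝ) : Continuous (gaussianWeight b : E → ℝ) := by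
  unfold gaussianWeight
  fun_prop

-- Half of the exponent absorbs the linear factor, since `1 + t ≤ (1 + 1/(2b)) exp (b t² / 2)`.
theorem one_add_norm_mul_gaussianWeight_le (hb : 0 < b) (y : E) :
    (1 + ‖y‖) * gaussianWeight b y ≤ (1 + 1 / (2 * b)) * gaussianWeight (b / 2) y := by
  have hsplit : gaussianWeight b y = Real.exp (-(b / 2 * ‖y‖ ^ 2)) * gaussianWeight (b / 2) y := by
    rw [gaussianWeight, gaussianWeight, ← Real.exp_add]
    congr 1
    ring
  have hexp : 1 + b / 2 * ‖y‖ ^ 2 ≤ Real.exp (b / 2 * ‖y‖ ^ 2) := by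
    linarith [Real.add_one_le_exp (b / 2 * ‖y‖ ^ 2)]
  have hyoung : ‖y‖ ≤ b / 2 * ‖y‖ ^ 2 + 1 / (2 * b) := by
    have h : b / 2 * ‖y‖ ^ 2 + 1 / (2 * b) - ‖y‖ = (b * ‖y‖ - 1) ^ 2 / (2 * b) := by
      field_simp
      ring
    linarith [show 0 ≤ (b * ‖y‖ - 1) ^ 2 / (2 * b) by positivity]
  have hone : 1 + ‖y‖ ≤ (1 + 1 / (2 * b)) * Real.exp (b / 2 * ‖y‖ ^ 2) := by
    have hge : 1 ≤ Real.exp (b / 2 * ‖y‖ ^ 2) := Real.one_le_exp (by positivity)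
    nlinarith [mul_le_mul_of_nonneg_left hge (show 0 ≤ 1 / (2 * b) by positivity)]
  rw [hsplit, ← mul_assoc, Real.exp_neg, ← div_eq_mul_inv]
  exact mul_le_mul_of_nonneg_right ((div_le_iff₀ (Real.exp_pos _)).2 hone)
    (gaussianWeight_pos _ y).le

variable [InnerProductSpace ℝ E]

theorem hasFDerivAt_gaussianWeight (b : ℝ) (y : E) :
    HasFDerivAt (gaussianWeight b) ((-2 * b * gaussianWeight b y) • innerSL ℝ y) y := by
  refine ((hasStrictFDerivAt_norm_sq y).hasFDerivAt.const_mul (-b)).exp.congr_fderiv ?_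
  ext z
  simp only [gaussianWeight, smul_apply, smul_eq_mul, nsmul_eq_mul]
  push_cast
  ring

theorem fderiv_gaussianWeight_apply (b : ℝ) (y e : E) :
    fderiv ℝ (gaussianWeight b) y e = -2 * b * (gaussianWeight b y * ⟪y, e⟫) := by
  simp [(hasFDerivAt_gaussianWeight b y).fderiv, mul_assoc]

variable [FiniteDimensional ℝ E] [MeasurableSpace E] [BorelSpace E]

theorem integral_gaussianWeight (hb : 0 < b) :
    ∫ y : E, gaussianWeight b y = (Real.pi / b) ^ (Module.finrank ℝ E / 2 : ℝ) :=
  GaussianFourier.integral_rexp_neg_mul_sq_norm hb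

theorem integrable_gaussianWeight (hb : 0 < b) : Integrable (gaussianWeight b : E → ℝ) :=
  .of_integral_ne_zero (by rw [integral_gaussianWeight hb]; positivity)

theorem integrable_gaussianWeight_mul (hb : 0 < b) {k : E → ℝ} (hk : Continuous k) {C : ℝ}
    (hC : ∀ y, |k y| ≤ C * (1 + ‖y‖)) : Integrable fun y => gaussianWeight b y * k y := by
  have hC0 : 0 ≤ C := by simpa using (abs_nonneg _).trans (hC 0)
  refine ((integrable_gaussianWeight (half_pos hb)).const_mul (C * (1 + 1 / (2 * b)))).mono'
    (by fun_prop) (Eventually.of_forall fun y => ?_)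
  calc ‖gaussianWeight b y * k y‖ = gaussianWeight b y * |k y| := by
        rw [norm_mul, Real.norm_of_nonneg (gaussianWeight_pos b y).le, Real.norm_eq_abs]
    _ ≤ gaussianWeight b y * (C * (1 + ‖y‖)) :=
        mul_le_mul_of_nonneg_left (hC y) (gaussianWeight_pos b y).le
    _ = C * ((1 + ‖y‖) * gaussianWeight b y) := by ring
    _ ≤ C * ((1 + 1 / (2 * b)) * gaussianWeight (b / 2) y) :=
        mul_le_mul_of_nonneg_left (one_add_norm_mul_gaussianWeight_le hb y) hC0
    _ = C * (1 + 1 / (2 * b)) * gaussianWeight (b / 2) y := by ring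

theorem integrable_gaussianWeight_mul_of_bounded (hb : 0 < b) {k : E → ℝ} (hk : Continuous k)
    {C : ℝ} (hC : ∀ y, |k y| ≤ C) : Integrable fun y => gaussianWeight b y * k y :=
  integrable_gaussianWeight_mul hb hk fun y => (hC y).trans
    (le_mul_of_one_le_right ((abs_nonneg _).trans (hC y)) (by linarith [norm_nonneg y]))

theorem integrable_gaussianWeight_mul_inner_mul (hb : 0 < b) {k : E → ℝ} (hk : Continuous k)
    {C : ℝ} (hC : ∀ y, |k y| ≤ C) (e : E) :
    Integrable fun y => gaussianWeight b y * (⟪y, e⟫ * k y) := by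
  refine integrable_gaussianWeight_mul hb (C := ‖e‖ * C)
    ((continuous_id.inner continuous_const).mul hk) fun y => ?_
  calc |⟪y, e⟫ * k y| = |⟪y, e⟫| * |k y| := abs_mul _ _
    _ ≤ ((1 + ‖y‖) * ‖e‖) * C := mul_le_mul ((abs_real_inner_le_norm y e).trans (by
        nlinarith [norm_nonneg e])) (hC y) (abs_nonneg _) (by positivity)
    _ = ‖e‖ * C * (1 + ‖y‖) := by ring

-- Stein's lemma.
theorem integral_gaussianWeight_mul_inner_mul (hb : 0 < b) {h : E → ℝ} (hh : ContDiff ℝ 1 h)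
    {C C' : ℝ} (hC : ∀ y, |h y| ≤ C) (hC' : ∀ y, ‖fderiv ℝ h y‖ ≤ C') (e : E) :
    2 * b * ∫ y, gaussianWeight b y * (⟪y, e⟫ * h y) =
      ∫ y, gaussianWeight b y * fderiv ℝ h y e := by
  have hcont' : Continuous (fderiv ℝ h) := hh.continuous_fderiv one_ne_zero
  have hdir : Integrable fun y => gaussianWeight b y * fderiv ℝ h y e :=
    integrable_gaussianWeight_mul_of_bounded hb (hcont'.clm_apply continuous_const) fun y =>
      ((fderiv ℝ h y).le_opNorm e).trans (mul_le_mul_of_nonneg_right (hC' y) (norm_nonneg e))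
  have hweight : ∀ y, fderiv ℝ (gaussianWeight b) y e * h y =
      -2 * b * (gaussianWeight b y * (⟪y, e⟫ * h y)) := fun y => by
    rw [fderiv_gaussianWeight_apply]
    ring
  have hparts := integral_mul_fderiv_eq_neg_fderiv_mul_of_integrable (μ := volume)
    (f := gaussianWeight b) (g := h) (v := e)
    (by simpa only [hweight] using
      (integrable_gaussianWeight_mul_inner_mul hb hh.continuous hC e).const_mul (-2 * b)) hdir
    (integrable_gaussianWeight_mul_of_bounded hb hh.continuous hC)
    (fun y _ => (hasFDerivAt_gaussianWeight b y).differentiableAt)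
    (fun y _ => hh.differentiable one_ne_zero y)
  simp only [hweight, integral_const_mul] at hparts
  linarith

end Gaussian

section MeanValue

/-- A lower bound of Faber–Krahn type, with a constant that is not sharp: no nonnegative function
whose support has smaller volume satisfies `-(c * sup f) ≤ Δ f`, except `0`. -/
noncomputable def criticalVolume (E : Type*) [AddCommGroup E] [Module ℝ E] (c : ℝ) : ℝ :=
  (2 * Real.pi / c) ^ (Module.finrank ℝ E / 2 : ℝ) / 2

theorem criticalVolume_pos (E : Type*) [AddCommGroup E] [Module ℝ E] {c : ℝ} (hc : 0 < c) :
    0 < criticalVolume E c := by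
  unfold criticalVolume
  positivity

variable {E : Type*} [NormedAddCommGroup E] [InnerProductSpace ℝ E] {b : ℝ} {f : E → ℝ}

theorem exists_norm_fderiv_le (hf : ContDiff ℝ 1 f) (hsupp : HasCompactSupport f) :
    ∃ C, ∀ y, ‖fderiv ℝ f y‖ ≤ C :=
  (hf.continuous_fderiv one_ne_zero).bounded_above_of_compact_support (hsupp.fderiv ℝ)

theorem exists_norm_fderiv_fderiv_le (hf : ContDiff ℝ 2 f) (hsupp : HasCompactSupport f) :
    ∃ C, ∀ y, ‖fderiv ℝ (fderiv ℝ f) y‖ ≤ C :=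
  ((hf.fderiv_right (m := 1) le_rfl).continuous_fderiv one_ne_zero).bounded_above_of_compact_support
    ((hsupp.fderiv ℝ).fderiv ℝ)

variable [FiniteDimensional ℝ E]

theorem continuous_laplacian (hf : ContDiff ℝ 2 f) : Continuous (Δ f) := by
  have hcont : Continuous (fderiv ℝ (fderiv ℝ f)) :=
    (hf.fderiv_right (m := 1) le_rfl).continuous_fderiv one_ne_zero
  rw [funext (laplacian_eq_sum_fderiv_fderiv f)]
  exact continuous_finsetSum _ fun i _ =>
    (hcont.clm_apply continuous_const).clm_apply continuous_const

theorem exists_abs_laplacian_le (hf : ContDiff ℝ 2 f) (hsupp : HasCompactSupport f) :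
    ∃ C, ∀ y, |Δ f y| ≤ C := by
  refine (continuous_laplacian hf).bounded_above_of_compact_support
    (hsupp.mono' fun y hy => ?_)
  by_contra hyf
  have hzero : f =ᶠ[𝓝 y] fun _ => 0 := notMem_tsupport_iff_eventuallyEq.1 hyf
  exact hy (by simpa using (InnerProductSpace.laplacian_congr_nhds hzero).eq_of_nhds)

variable [MeasurableSpace E] [BorelSpace E]

theorem hasDerivAt_integral_gaussianWeight_mul (hb : 0 < b) (hf : ContDiff ℝ 1 f)
    (hsupp : HasCompactSupport f) (x : E) (s : ℝ) :
    HasDerivAt (fun t => ∫ y, gaussianWeight b y * f (x + t • y))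
      (∫ y, gaussianWeight b y * fderiv ℝ f (x + s • y) y) s := by
  have hcont : Continuous f := hf.continuous
  have hcont' : Continuous (fderiv ℝ f) := hf.continuous_fderiv one_ne_zero
  obtain ⟨C, hC⟩ := hcont.bounded_above_of_compact_support hsupp
  obtain ⟨C', hC'⟩ := exists_norm_fderiv_le hf hsupp
  have hdircont : ∀ t : ℝ, Continuous fun y => fderiv ℝ f (x + t • y) y := fun t =>
    (hcont'.comp (by fun_prop)).clm_apply continuous_id
  have hC'0 : 0 ≤ C' := (norm_nonneg _).trans (hC' 0)
  have hdir : ∀ (t : ℝ) (y : E), |fderiv ℝ f (x + t • y) y| ≤ C' * ‖y‖ := fun t y =>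
    (ContinuousLinearMap.le_opNorm _ y).trans (mul_le_mul_of_nonneg_right (hC' _) (norm_nonneg y))
  refine (hasDerivAt_integral_of_dominated_loc_of_deriv_le
    (F := fun t y => gaussianWeight b y * f (x + t • y))
    (F' := fun t y => gaussianWeight b y * fderiv ℝ f (x + t • y) y)
    (bound := fun y => gaussianWeight b y * (C' * ‖y‖)) univ_mem
    (Eventually.of_forall fun t => by fun_prop)
    (integrable_gaussianWeight_mul_of_bounded hb (by fun_prop) fun y => hC _)
    ((continuous_gaussianWeight b).mul (hdircont s)).aestronglyMeasurable
    (Eventually.of_forall fun y t _ => ?_)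
    (integrable_gaussianWeight_mul hb (C := C') (by fun_prop) fun y => ?_)
    (Eventually.of_forall fun y t _ => ?_)).2
  · rw [norm_mul, Real.norm_of_nonneg (gaussianWeight_pos b y).le]
    exact mul_le_mul_of_nonneg_left (hdir t y) (gaussianWeight_pos b y).le
  · rw [abs_of_nonneg (by positivity)]
    gcongr
    linarith
  · exact ((hf.differentiable one_ne_zero _).hasFDerivAt.comp_hasDerivAt t
      (hasDerivAt_add_smul x y t)).const_mul _

theorem integral_gaussianWeight_mul_inner_mul_fderiv (hb : 0 < b) (hf : ContDiff ℝ 2 f)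
    (hsupp : HasCompactSupport f) (x e : E) (s : ℝ) :
    2 * b * ∫ y, gaussianWeight b y * (⟪y, e⟫ * fderiv ℝ f (x + s • y) e) =
      s * ∫ y, gaussianWeight b y * fderiv ℝ (fderiv ℝ f) (x + s • y) e e := by
  have hf' : ContDiff ℝ 1 (fderiv ℝ f) := hf.fderiv_right le_rfl
  obtain ⟨C, hC⟩ := exists_norm_fderiv_le (hf.of_le one_le_two) hsupp
  obtain ⟨C', hC'⟩ := exists_norm_fderiv_fderiv_le hf hsupp
  have hderiv : ∀ y, HasFDerivAt (fun z => fderiv ℝ f (x + s • z) e)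
      (s • (fderiv ℝ (fderiv ℝ f) (x + s • y)).flip e) y := fun y => by
    have hinner : HasFDerivAt (fun z : E => x + s • z) (s • ContinuousLinearMap.id ℝ E) y :=
      ((hasFDerivAt_id y).const_smul s).const_add x
    refine ((hasFDerivAt_fderiv_apply_of_contDiffAt_two hf.contDiffAt e).comp y
      hinner).congr_fderiv ?_
    ext z
    simp
  have hstein := integral_gaussianWeight_mul_inner_mul hb
    (h := fun y => fderiv ℝ f (x + s • y) e) (C := C * ‖e‖) (C' := ‖s‖ * (C' * ‖e‖))
    ((hf'.comp (by fun_prop)).clm_apply contDiff_const)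
    (fun y => (ContinuousLinearMap.le_opNorm _ e).trans
      (mul_le_mul_of_nonneg_right (hC _) (norm_nonneg e)))
    (fun y => by
      rw [(hderiv y).fderiv, norm_smul]
      gcongr
      refine (ContinuousLinearMap.le_opNorm _ e).trans ?_
      rw [ContinuousLinearMap.opNorm_flip]
      exact mul_le_mul_of_nonneg_right (hC' _) (norm_nonneg e)) e
  rw [hstein, ← integral_const_mul]
  refine integral_congr_ae (Eventually.of_forall fun y => ?_)
  simp only [(hderiv y).fderiv, smul_apply, ContinuousLinearMap.flip_apply, smul_eq_mul]
  ring

theorem integral_gaussianWeight_mul_fderiv_self (hb : 0 < b) (hf : ContDiff ℝ 2 f)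
    (hsupp : HasCompactSupport f) (x : E) (s : ℝ) :
    2 * b * ∫ y, gaussianWeight b y * fderiv ℝ f (x + s • y) y =
      s * ∫ y, gaussianWeight b y * Δ f (x + s • y) := by
  have hf' : ContDiff ℝ 1 (fderiv ℝ f) := hf.fderiv_right le_rfl
  have hcont' : Continuous (fderiv ℝ f) := hf'.continuous
  have hcont'' : Continuous (fderiv ℝ (fderiv ℝ f)) := hf'.continuous_fderiv one_ne_zero
  obtain ⟨C, hC⟩ := exists_norm_fderiv_le (hf.of_le one_le_two) hsupp
  obtain ⟨C', hC'⟩ := exists_norm_fderiv_fderiv_le hf hsupp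
  let e := stdOrthonormalBasis ℝ E
  have hfst : ∀ i, Integrable fun y =>
      gaussianWeight b y * (⟪y, e i⟫ * fderiv ℝ f (x + s • y) (e i)) := fun i =>
    integrable_gaussianWeight_mul_inner_mul hb (by fun_prop)
      (fun y => ContinuousLinearMap.le_of_opNorm_le _ (hC _) _) _
  have hsnd : ∀ i, Integrable fun y =>
      gaussianWeight b y * fderiv ℝ (fderiv ℝ f) (x + s • y) (e i) (e i) := fun i =>
    integrable_gaussianWeight_mul_of_bounded hb
      (((hcont''.comp (by fun_prop)).clm_apply continuous_const).clm_apply continuous_const)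
      fun y => ContinuousLinearMap.le_of_opNorm₂_le_of_le _ (hC' _) le_rfl le_rfl
  have hexpand : ∀ y, fderiv ℝ f (x + s • y) y =
      ∑ i, ⟪y, e i⟫ * fderiv ℝ f (x + s • y) (e i) := fun y => by
    simpa [real_inner_comm] using congrArg (fderiv ℝ f (x + s • y)) (e.sum_repr' y).symm
  simp_rw [hexpand, laplacian_eq_sum_fderiv_fderiv, Finset.mul_sum]
  rw [integral_finsetSum _ fun i _ => hfst i, integral_finsetSum _ fun i _ => hsnd i,
    Finset.mul_sum, Finset.mul_sum]
  exact Finset.sum_congr rfl fun i _ =>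
    integral_gaussianWeight_mul_inner_mul_fderiv hb hf hsupp x (e i) s

-- The derivative in `s` of the Gaussian mean of `f` on scale `s` is `s/(2b)` times the Gaussian
-- mean of `Δ f`, by Stein's lemma.
theorem mul_integral_gaussianWeight_le (hb : 0 < b) (hf : ContDiff ℝ 2 f)
    (hsupp : HasCompactSupport f) {M : ℝ} (hM : ∀ y, -M ≤ Δ f y) (x : E) :
    f x * ∫ y : E, gaussianWeight b y ≤
      (∫ y, gaussianWeight b y * f (x + y)) + M / (4 * b) * ∫ y : E, gaussianWeight b y := by
  set J := ∫ y : E, gaussianWeight b y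
  obtain ⟨C, hC⟩ := exists_abs_laplacian_le hf hsupp
  have hcont : Continuous (Δ f) := continuous_laplacian hf
  let mean : ℝ → ℝ := fun s => (∫ y, gaussianWeight b y * f (x + s • y)) + s ^ 2 * (M / (4 * b) * J)
  have hderiv : ∀ s : ℝ, HasDerivAt mean (s / (2 * b) *
      ((∫ y, gaussianWeight b y * Δ f (x + s • y)) + M * J)) s := fun s => by
    refine ((hasDerivAt_integral_gaussianWeight_mul hb (hf.of_le one_le_two) hsupp x s).add
      (((hasDerivAt_id s).pow 2).mul_const (M / (4 * b) * J))).congr_deriv ?_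
    have hstein := integral_gaussianWeight_mul_fderiv_self hb hf hsupp x s
    simp only [id]
    push_cast
    field_simp
    linear_combination 4 * hstein
  have hnonneg : ∀ s : ℝ, 0 ≤ (∫ y, gaussianWeight b y * Δ f (x + s • y)) + M * J := fun s => by
    have hint := integrable_gaussianWeight_mul_of_bounded hb (k := fun y => Δ f (x + s • y))
      (by fun_prop) fun y => hC _
    rw [← integral_const_mul, ← integral_add hint ((integrable_gaussianWeight hb).const_mul M)]
    exact integral_nonneg fun y => by
      have := mul_nonneg (gaussianWeight_pos b y).le (neg_le_iff_add_nonneg.1 (hM (x + s • y)))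
      simp only [Pi.zero_apply]
      linarith
  have hmono : MonotoneOn mean (Set.Ici 0) :=
    monotoneOn_of_hasDerivWithinAt_nonneg (convex_Ici 0)
      (fun s _ => (hderiv s).continuousAt.continuousWithinAt)
      (fun s _ => (hderiv s).hasDerivWithinAt)
      (fun s hs => mul_nonneg (by rw [interior_Ici] at hs; have := hs.out; positivity) (hnonneg s))
  have h01 := hmono Set.self_mem_Ici (Set.mem_Ici.2 zero_le_one) zero_le_one
  simpa [mean, integral_mul_const, mul_comm (f x), J] using h01

theorem criticalVolume_le_measureReal_support (hf : ContDiff ℝ 2 f) (hsupp : HasCompactSupport f)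
    (hf0 : ∀ y, 0 ≤ f y) {x : E} (hmax : ∀ y, f y ≤ f x) (hx : 0 < f x) {c : ℝ} (hc : 0 < c)
    (hΔ : ∀ y, -(c * f x) ≤ Δ f y) :
    criticalVolume E c ≤ volume.real (Function.support f) := by
  have hmean := mul_integral_gaussianWeight_le (half_pos hc) hf hsupp hΔ x
  have hint : Integrable f := hf.continuous.integrable_of_hasCompactSupport hsupp
  have hle : ∫ y, gaussianWeight (c / 2) y * f (x + y) ≤ ∫ y, f y := by
    rw [← integral_add_left_eq_self f x]
    refine integral_mono (integrable_gaussianWeight_mul_of_bounded (half_pos hc) (C := f x)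
      (by have := hf.continuous; fun_prop) fun y => ?_) (hint.comp_add_left x) fun y => ?_
    · rw [abs_of_nonneg (hf0 _)]
      exact hmax _
    · exact mul_le_of_le_one_left (hf0 _) (gaussianWeight_le_one (half_pos hc).le y)
  have hsup : ∫ y, f y ≤ f x * volume.real (Function.support f) := by
    rw [← setIntegral_eq_integral_of_forall_compl_eq_zero (s := Function.support f)
      fun y hy => Function.notMem_support.1 hy]
    exact (le_abs_self _).trans (norm_setIntegral_le_of_norm_le_const
      ((measure_mono subset_closure).trans_lt hsupp.isCompact.measure_lt_top)
      fun y _ => (Real.norm_of_nonneg (hf0 y)).trans_le (hmax y))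
  have hJ : ∫ y : E, gaussianWeight (c / 2) y = 2 * criticalVolume E c := by
    rw [integral_gaussianWeight (half_pos hc), criticalVolume, mul_div_cancel₀ _ two_ne_zero,
      div_div_eq_mul_div, mul_comm Real.pi]
  rw [hJ] at hmean
  have hhalf : c * f x / (4 * (c / 2)) * (2 * criticalVolume E c) = f x * criticalVolume E c := by
    field_simp
    ring
  refine le_of_mul_le_mul_left ?_ hx
  linarith

end MeanValue

section Truncation

variable {E : Type*} {O : Set E} {w : E → ℝ} {x : E}

/-- The cube of the positive part of `w`, extended by zero outside `O`. When `w` is negative on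
`frontier O` this is a `C²` function on the whole space; the square would only be `C¹`. -/
noncomputable def posPartCube (O : Set E) (w : E → ℝ) : E → ℝ :=
  O.indicator fun y => max (w y) 0 ^ 3

theorem posPartCube_of_mem (hx : x ∈ O) : posPartCube O w x = max (w x) 0 ^ 3 :=
  Set.indicator_of_mem hx _

theorem posPartCube_nonneg (O : Set E) (w : E → ℝ) (x : E) : 0 ≤ posPartCube O w x :=
  Set.indicator_nonneg (fun _ _ => by positivity) x

theorem posPartCube_eventuallyEq_comp [TopologicalSpace E] (hO : IsOpen O) (hx : x ∈ O) :
    posPartCube O w =ᶠ[𝓝 x] (fun s : ℝ => max s 0 ^ 3) ∘ w :=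
  Set.eqOn_indicator.eventuallyEq_of_mem (hO.mem_nhds hx)

theorem posPartCube_eventuallyEq_zero [TopologicalSpace E] (hwc : ContinuousOn w (closure O))
    (hx : x ∉ closure O ∩ w ⁻¹' Set.Ici 0) : posPartCube O w =ᶠ[𝓝 x] fun _ => 0 := by
  have hclosed : IsClosed (closure O ∩ w ⁻¹' Set.Ici 0) :=
    hwc.preimage_isClosed_of_isClosed isClosed_closure isClosed_Ici
  filter_upwards [hclosed.isOpen_compl.mem_nhds hx] with y hy
  refine Set.indicator_apply_eq_zero.2 fun hyO => ?_
  have hyneg : w y < 0 := not_le.1 fun h => hy ⟨subset_closure hyO, h⟩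
  simp [max_eq_right hyneg.le]

theorem closure_inter_preimage_Ici_subset_of_frontier_neg [TopologicalSpace E] (hO : IsOpen O)
    (hfr : ∀ y ∈ frontier O, w y < 0) : closure O ∩ w ⁻¹' Set.Ici 0 ⊆ O := fun y hy => by
  by_contra hyO
  exact (hfr y ⟨hy.1, by rwa [hO.interior_eq]⟩).not_ge hy.2

variable [NormedAddCommGroup E] [InnerProductSpace ℝ E]

theorem contDiff_posPartCube (hO : IsOpen O) (hwc : ContinuousOn w (closure O))
    (hw : ContDiffOn ℝ 2 w O) (hfr : ∀ y ∈ frontier O, w y < 0) :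
    ContDiff ℝ 2 (posPartCube O w) := by
  refine contDiff_iff_contDiffAt.2 fun y => ?_
  by_cases hy : y ∈ closure O ∩ w ⁻¹' Set.Ici 0
  · have hyO := closure_inter_preimage_Ici_subset_of_frontier_neg hO hfr hy
    exact ((contDiff_max_zero_pow_succ 2).contDiffAt.comp y
      (hw.contDiffAt (hO.mem_nhds hyO))).congr_of_eventuallyEq
      (posPartCube_eventuallyEq_comp hO hyO)
  · exact contDiffAt_const.congr_of_eventuallyEq (posPartCube_eventuallyEq_zero hwc hy)

variable [FiniteDimensional ℝ E]

theorem hasCompactSupport_posPartCube (hOb : Bornology.IsBounded O)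
    (hwc : ContinuousOn w (closure O)) : HasCompactSupport (posPartCube O w) :=
  .intro (hOb.isCompact_closure.of_isClosed_subset
    (hwc.preimage_isClosed_of_isClosed isClosed_closure isClosed_Ici) Set.inter_subset_left)
    fun _ hy => (posPartCube_eventuallyEq_zero hwc hy).eq_of_nhds

theorem mul_laplacian_le_laplacian_posPartCube (hO : IsOpen O) (hw : ContDiffAt ℝ 2 w x)
    (hx : x ∈ O) : 3 * max (w x) 0 ^ 2 * Δ w x ≤ Δ (posPartCube O w) x := by
  have hderiv : deriv (fun s : ℝ => max s 0 ^ 3) = fun t : ℝ => 3 * max t 0 ^ 2 := by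
    norm_num [deriv_max_zero_pow 1]
  have hderiv2 : deriv (deriv fun s : ℝ => max s 0 ^ 3) (w x) = 3 * (2 * max (w x) 0) := by
    rw [hderiv, deriv_const_mul_field, deriv_max_zero_pow 0]
    norm_num
  have hle := deriv_mul_laplacian_le_laplacian_comp (contDiff_max_zero_pow_succ 2)
    (by rw [hderiv2]; positivity) hw
  rwa [hderiv, ← (InnerProductSpace.laplacian_congr_nhds
    (posPartCube_eventuallyEq_comp hO hx)).eq_of_nhds] at hle

theorem laplacian_posPartCube_of_notMem (hO : IsOpen O) (hwc : ContinuousOn w (closure O))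
    (hfr : ∀ y ∈ frontier O, w y < 0) (hx : x ∉ O) : Δ (posPartCube O w) x = 0 := by
  have hzero := posPartCube_eventuallyEq_zero hwc
    fun h => hx (closure_inter_preimage_Ici_subset_of_frontier_neg hO hfr h)
  simpa using (InnerProductSpace.laplacian_congr_nhds hzero).eq_of_nhds

variable [MeasurableSpace E] [BorelSpace E]

theorem criticalVolume_le_measureReal_of_frontier_neg (hO : IsOpen O)
    (hOb : Bornology.IsBounded O) (hwc : ContinuousOn w (closure O)) (hw : ContDiffOn ℝ 2 w O)
    (hfr : ∀ y ∈ frontier O, w y < 0) (hx : x ∈ O) (hmax : IsMaxOn w O x) (hpos : 0 < w x)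
    {c : ℝ} (hc : 0 < c) (hΔ : ∀ y ∈ O, 0 < w y → -(c * w x) ≤ Δ w y) :
    criticalVolume E (3 * c) ≤ volume.real O := by
  have hcube : posPartCube O w x = w x ^ 3 := by rw [posPartCube_of_mem hx, max_eq_left hpos.le]
  refine (criticalVolume_le_measureReal_support (contDiff_posPartCube hO hwc hw hfr)
    (hasCompactSupport_posPartCube hOb hwc) (posPartCube_nonneg O w) (x := x) (fun y => ?_)
    (by rw [hcube]; positivity) (by positivity) fun y => ?_).trans
    (measureReal_mono (Set.support_indicator_subset) hOb.measure_lt_top.ne)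
  · rw [hcube]
    exact Set.indicator_apply_le' (fun hy => pow_le_pow_left₀ (le_max_right _ _)
      (max_le (hmax hy) hpos.le) 3) fun _ => by positivity
  · rw [hcube]
    by_cases hyO : y ∈ O
    · refine le_trans ?_
        (mul_laplacian_le_laplacian_posPartCube hO (hw.contDiffAt (hO.mem_nhds hyO)) hyO)
      rcases le_or_gt (w y) 0 with hwy | hwy
      · simp only [max_eq_right hwy]
        exact le_of_le_of_eq (neg_nonpos.2 (by positivity)) (by ring)
      · have hle : w y ^ 2 ≤ w x ^ 2 := pow_le_pow_left₀ hwy.le (hmax hyO) 2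
        rw [max_eq_left hwy.le]
        calc -(3 * c * w x ^ 3) = -(3 * (c * w x) * w x ^ 2) := by ring
          _ ≤ -(3 * (c * w x) * w y ^ 2) := by gcongr
          _ = 3 * w y ^ 2 * -(c * w x) := by ring
          _ ≤ 3 * w y ^ 2 * Δ w y := by gcongr; exact hΔ y hyO hwy
    · rw [laplacian_posPartCube_of_notMem hO hwc hfr hyO]
      exact neg_nonpos.2 (by positivity)

theorem criticalVolume_le_measureReal_of_frontier_nonpos (hO : IsOpen O)
    (hOb : Bornology.IsBounded O) (hwc : ContinuousOn w (closure O)) (hw : ContDiffOn ℝ 2 w O)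
    (hfr : ∀ y ∈ frontier O, w y ≤ 0) (hx : x ∈ O) (hmax : IsMaxOn w O x) (hpos : 0 < w x)
    {c : ℝ} (hc : 0 < c) (hΔ : ∀ y ∈ O, 0 < w y → -(c * w x) ≤ Δ w y) :
    criticalVolume E (6 * c) ≤ volume.real O := by
  have hhalf : 6 * c = 3 * (2 * c) := by ring
  rw [hhalf]
  refine criticalVolume_le_measureReal_of_frontier_neg (w := fun y => w y - w x / 2) hO hOb
    (hwc.sub continuousOn_const) (hw.sub contDiffOn_const) (fun y hy => ?_) hx
    (fun y hy => ?_) ?_ (by positivity) fun y hy hwy => ?_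
  · linarith [hfr y hy]
  · simpa using hmax hy
  · linarith
  · have hsub := (hw.contDiffAt (hO.mem_nhds hy)).laplacian_sub
      (contDiffAt_const (c := w x / 2))
    rw [show Δ (fun y => w y - w x / 2) y = Δ w y by simpa using! hsub]
    linarith [hΔ y hy (by linarith)]

end Truncation

theorem exists_forall_le_of_isCompact {X ι : Type*} [TopologicalSpace X] [Finite ι] [Nonempty ι]
    {f : ι → X → ℝ} {K : Set X} (hK : IsCompact K) (hne : K.Nonempty)
    (hf : ∀ i, ContinuousOn (f i) K) : ∃ i, ∃ x ∈ K, ∀ j, ∀ y ∈ K, f j y ≤ f i x := by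
  choose a ha hmax using fun i => hK.exists_isMaxOn hne (hf i)
  obtain ⟨i, hi⟩ := Finite.exists_max fun i => f i (a i)
  exact ⟨i, a i, ha i, fun j y hy => (hmax j hy).trans (hi j)⟩

section System

variable {E ι : Type*} {M : E → Matrix ι ι ℝ} {Ω O K : Set E} {w z φ : ι → E → ℝ} {i : ι} {x : E}
  {c t : ℝ}

/-- The coupling `M` is cooperative in `Ω` (no off-diagonal entry is negative) with entries bounded
above by `c`. -/
structure IsCooperativeOn (M : E → Matrix ι ι ℝ) (Ω : Set E) (c : ℝ) : Prop where
  nonneg_of_ne : ∀ x ∈ Ω, ∀ i j, i ≠ j → 0 ≤ M x i j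
  le : ∀ x ∈ Ω, ∀ i j, M x i j ≤ c

theorem IsCooperativeOn.mono (hM : IsCooperativeOn M Ω c) (hO : O ⊆ Ω) : IsCooperativeOn M O c :=
  ⟨fun x hx => hM.nonneg_of_ne x (hO hx), fun x hx => hM.le x (hO hx)⟩

theorem IsCooperativeOn.mul_le_mul_of_forall_le (hM : IsCooperativeOn M Ω c) (hx : x ∈ Ω)
    (hc : 0 ≤ c) {m : ℝ} (hm : ∀ j, w j x ≤ m) (hi : 0 ≤ w i x) (j : ι) :
    M x i j * w j x ≤ c * m := by
  have hm0 : 0 ≤ m := hi.trans (hm i)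
  by_cases hij : i = j
  · subst hij
    exact (mul_le_mul_of_nonneg_right (hM.le x hx i i) hi).trans
      (mul_le_mul_of_nonneg_left (hm i) hc)
  · exact (mul_le_mul_of_nonneg_left (hm j) (hM.nonneg_of_ne x hx i j hij)).trans
      (mul_le_mul_of_nonneg_right (hM.le x hx i j) hm0)

variable [NormedAddCommGroup E] [InnerProductSpace ℝ E] [FiniteDimensional ℝ E] [Fintype ι]

/-- The `i`-th component at `x` of `Δ w + M w`, the linear system with coupling matrix `M`. -/
noncomputable def coupledLaplacian (M : E → Matrix ι ι ℝ) (w : ι → E → ℝ) (i : ι) (x : E) : ℝ :=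
  Δ (w i) x + ∑ j, M x i j * w j x

/-- `w` is a classical subsolution of the Dirichlet problem `Δ w + M w = 0` in `Ω`, `w = 0` on
`frontier Ω`. Supersolutions are encoded as the families `w` for which `-w` is a subsolution. -/
structure IsDirichletSubsol (M : E → Matrix ι ι ℝ) (Ω : Set E) (w : ι → E → ℝ) : Prop where
  continuousOn : ∀ i, ContinuousOn (w i) (closure Ω)
  contDiffOn : ∀ i, ContDiffOn ℝ 2 (w i) Ω
  nonpos_of_mem_frontier : ∀ i, ∀ x ∈ frontier Ω, w i x ≤ 0
  coupledLaplacian_nonneg : ∀ i, ∀ x ∈ Ω, 0 ≤ coupledLaplacian M w i x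

theorem coupledLaplacian_add_smul (hw : ContDiffAt ℝ 2 (w i) x) (hz : ContDiffAt ℝ 2 (z i) x)
    (t : ℝ) : coupledLaplacian M (w + t • z) i x =
      coupledLaplacian M w i x + t * coupledLaplacian M z i x := by
  have hΔ : Δ (w i + t • z i) x = Δ (w i) x + t * Δ (z i) x := by
    have hsmul : ContDiffAt ℝ 2 (t • z i) x := contDiffAt_const.smul hz
    rw [hw.laplacian_add hsmul, InnerProductSpace.laplacian_smul t hz,
      smul_eq_mul]
  simp only [coupledLaplacian, Pi.add_apply, Pi.smul_apply, hΔ, smul_eq_mul, mul_add,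
    Finset.sum_add_distrib, Finset.mul_sum, mul_left_comm t]
  ring

theorem coupledLaplacian_neg :
    coupledLaplacian M (-w) i x = -coupledLaplacian M w i x := by
  simp only [coupledLaplacian, Pi.neg_apply, InnerProductSpace.laplacian_neg, mul_neg,
    Finset.sum_neg_distrib, neg_add]

namespace IsDirichletSubsol

theorem contDiffAt (hw : IsDirichletSubsol M Ω w) (hΩ : IsOpen Ω) (i : ι) (hx : x ∈ Ω) :
    ContDiffAt ℝ 2 (w i) x :=
  (hw.contDiffOn i).contDiffAt (hΩ.mem_nhds hx)

theorem add_smul (hw : IsDirichletSubsol M Ω w) (hz : IsDirichletSubsol M Ω z) (hΩ : IsOpen Ω)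
    (ht : 0 ≤ t) : IsDirichletSubsol M Ω (w + t • z) where
  continuousOn i := (hw.continuousOn i).add ((hz.continuousOn i).const_smul t)
  contDiffOn i := (hw.contDiffOn i).add ((hz.contDiffOn i).const_smul t)
  nonpos_of_mem_frontier i x hx := add_nonpos (hw.nonpos_of_mem_frontier i x hx)
    (mul_nonpos_of_nonneg_of_nonpos ht (hz.nonpos_of_mem_frontier i x hx))
  coupledLaplacian_nonneg i x hx := by
    rw [coupledLaplacian_add_smul (hw.contDiffAt hΩ i hx) (hz.contDiffAt hΩ i hx)]
    exact add_nonneg (hw.coupledLaplacian_nonneg i x hx)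
      (mul_nonneg ht (hz.coupledLaplacian_nonneg i x hx))

theorem sdiff_of_nonpos (hw : IsDirichletSubsol M Ω w) (hΩ : IsOpen Ω) (hK : IsClosed K)
    (hwK : ∀ i, ∀ x ∈ K, w i x ≤ 0) : IsDirichletSubsol M (Ω \ K) w where
  continuousOn i := (hw.continuousOn i).mono (closure_mono Set.sdiff_subset)
  contDiffOn i := (hw.contDiffOn i).mono Set.sdiff_subset
  nonpos_of_mem_frontier i x hx := by
    by_cases hxK : x ∈ K
    · exact hwK i x hxK
    · refine hw.nonpos_of_mem_frontier i x ⟨closure_mono Set.sdiff_subset hx.1, fun hxΩ => ?_⟩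
      rw [frontier, (hΩ.sdiff hK).interior_eq] at hx
      exact hx.2 ⟨interior_subset hxΩ, hxK⟩
  coupledLaplacian_nonneg i x hx := hw.coupledLaplacian_nonneg i x hx.1

theorem eq_zero_of_nonpos_of_eq_zero (hz : IsDirichletSubsol M Ω z) (hM : IsCooperativeOn M Ω c)
    (hΩ : IsOpen Ω) (hle : ∀ i, ∀ y ∈ Ω, z i y ≤ 0) (hx : x ∈ Ω) (hi : z i x = 0) :
    coupledLaplacian M z i x = 0 ∧ ∀ j, 0 < M x i j → z j x = 0 := by
  have hΔ : Δ (z i) x ≤ 0 :=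
    laplacian_nonpos_of_isMaxOn hΩ (hz.contDiffOn i) hx fun y hy => (hle i y hy).trans hi.ge
  have hterm : ∀ j ∈ Finset.univ, M x i j * z j x ≤ 0 := fun j _ => by
    by_cases hij : i = j
    · simp [← hij, hi]
    · exact mul_nonpos_of_nonneg_of_nonpos (hM.nonneg_of_ne x hx i j hij) (hle j x hx)
  have hsum := Finset.sum_nonpos hterm
  have hnonneg := hz.coupledLaplacian_nonneg i x hx
  refine ⟨le_antisymm (add_nonpos hΔ hsum) hnonneg, fun j hj => ?_⟩
  have hsum0 : ∑ j, M x i j * z j x = 0 := hsum.antisymm (by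
    unfold coupledLaplacian at hnonneg
    linarith)
  exact (mul_eq_zero.1 ((Finset.sum_eq_zero_iff_of_nonpos hterm).1 hsum0 j
    (Finset.mem_univ j))).resolve_left hj.ne'

theorem lt_mul_of_le_mul_of_strict_supersol (hw : IsDirichletSubsol M Ω w)
    (hφ : IsDirichletSubsol M Ω (-φ)) (hM : IsCooperativeOn M Ω c) (hΩ : IsOpen Ω)
    (hstrict : ∀ x ∈ Ω, ∀ i, ∃ j, (i = j ∨ 0 < M x i j) ∧ coupledLaplacian M φ j x < 0)
    (ht : 0 < t) (hle : ∀ i, ∀ y ∈ Ω, w i y ≤ t * φ i y) (i : ι) (hx : x ∈ Ω) :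
    w i x < t * φ i x := by
  refine (hle i x hx).lt_of_ne fun htouch => ?_
  have hz := hw.add_smul hφ hΩ ht.le
  have hzle : ∀ i, ∀ y ∈ Ω, (w + t • -φ) i y ≤ 0 := fun i y hy => by
    simpa [← sub_eq_add_neg] using hle i y hy
  have hzi : (w + t • -φ) i x = 0 := by simp [htouch]
  obtain ⟨j, hij, hj⟩ := hstrict x hx i
  have hzj : (w + t • -φ) j x = 0 := by
    rcases hij with rfl | hij
    · exact hzi
    · exact (hz.eq_zero_of_nonpos_of_eq_zero hM hΩ hzle hx hzi).2 j hij
  have hzero := (hz.eq_zero_of_nonpos_of_eq_zero hM hΩ hzle hx hzj).1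
  rw [coupledLaplacian_add_smul (hw.contDiffAt hΩ j hx) (hφ.contDiffAt hΩ j hx),
    coupledLaplacian_neg] at hzero
  linarith [hw.coupledLaplacian_nonneg j x hx, mul_neg_of_pos_of_neg ht hj]

variable [MeasurableSpace E] [BorelSpace E]

theorem nonpos_of_measureReal_lt (hw : IsDirichletSubsol M O w) (hM : IsCooperativeOn M O c)
    (hO : IsOpen O) (hOb : Bornology.IsBounded O) (hc : 0 < c)
    (hvol : volume.real O < criticalVolume E (6 * (Fintype.card ι * c))) (i : ι) (hx : x ∈ O) :
    w i x ≤ 0 := by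
  by_contra! hpos
  have : Nonempty ι := ⟨i⟩
  obtain ⟨i₀, x₀, hx₀, hmax⟩ := exists_forall_le_of_isCompact hOb.isCompact_closure
    ⟨x, subset_closure hx⟩ hw.continuousOn
  have hm : 0 < w i₀ x₀ := hpos.trans_le (hmax i x (subset_closure hx))
  have hx₀O : x₀ ∈ O := by
    by_contra h
    exact (hw.nonpos_of_mem_frontier i₀ x₀ ⟨hx₀, by rwa [hO.interior_eq]⟩).not_gt hm
  refine hvol.not_ge (criticalVolume_le_measureReal_of_frontier_nonpos hO hOb
    (hw.continuousOn i₀) (hw.contDiffOn i₀) (hw.nonpos_of_mem_frontier i₀) hx₀O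
    (fun y hy => hmax i₀ y (subset_closure hy)) hm (by positivity) fun y hy hwy => ?_)
  have hsum : ∑ j, M y i₀ j * w j y ≤ Fintype.card ι * c * w i₀ x₀ := by
    simpa [mul_assoc] using Finset.sum_le_card_nsmul Finset.univ _ _ fun j _ =>
      hM.mul_le_mul_of_forall_le hy hc.le (fun j => hmax j y (subset_closure hy)) hwy.le j
  have hnonneg := hw.coupledLaplacian_nonneg i₀ y hy
  unfold coupledLaplacian at hnonneg
  linarith

theorem nonpos_of_nonpos_on_compact (hw : IsDirichletSubsol M Ω w) (hM : IsCooperativeOn M Ω c)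
    (hΩ : IsOpen Ω) (hΩb : Bornology.IsBounded Ω) (hc : 0 < c) (hK : IsCompact K)
    (hvol : volume.real (Ω \ K) < criticalVolume E (6 * (Fintype.card ι * c)))
    (hwK : ∀ i, ∀ x ∈ K, w i x ≤ 0) (i : ι) (hx : x ∈ Ω) : w i x ≤ 0 := by
  by_cases hxK : x ∈ K
  · exact hwK i x hxK
  · exact (hw.sdiff_of_nonpos hΩ hK.isClosed hwK).nonpos_of_measureReal_lt
      (hM.mono Set.sdiff_subset) (hΩ.sdiff hK.isClosed) (hΩb.subset Set.sdiff_subset) hc hvol i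
      ⟨hx, hxK⟩

-- Choose `t` so that `t φ` touches `w` from above on a compact `K ⊆ Ω` with `Ω \ K` small: then
-- `w ≤ t φ` in all of `Ω`, although `w / φ` need not be bounded near `frontier Ω` a priori.
theorem nonpos_of_pos_strict_supersol (hw : IsDirichletSubsol M Ω w)
    (hφ : IsDirichletSubsol M Ω (-φ)) (hM : IsCooperativeOn M Ω c) (hΩ : IsOpen Ω)
    (hΩb : Bornology.IsBounded Ω) (hc : 0 < c) (hφpos : ∀ i, ∀ x ∈ Ω, 0 < φ i x)
    (hstrict : ∀ x ∈ Ω, ∀ i, ∃ j, (i = j ∨ 0 < M x i j) ∧ coupledLaplacian M φ j x < 0)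
    (i : ι) (hx : x ∈ Ω) : w i x ≤ 0 := by
  have : Nonempty ι := ⟨i⟩
  have hcrit : 0 < criticalVolume E (6 * (Fintype.card ι * c)) :=
    criticalVolume_pos E (by positivity)
  obtain ⟨K, hKΩ, hK, hsmall⟩ := hΩ.measurableSet.exists_isCompact_sdiff_lt
    (μ := volume) hΩb.measure_lt_top.ne (ENNReal.ofReal_pos.2 hcrit).ne'
  have hvol := (ENNReal.lt_ofReal_iff_toReal_lt hsmall.ne_top).1 hsmall
  refine hw.nonpos_of_nonpos_on_compact hM hΩ hΩb hc hK hvol (fun j y hy => ?_) i hx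
  by_contra! hpos
  obtain ⟨i₀, x₀, hx₀, hmax⟩ := exists_forall_le_of_isCompact (f := fun i x => w i x / φ i x) hK
    ⟨y, hy⟩ fun i => by
      have hφi : ContinuousOn (φ i) Ω := by
        simpa using (hφ.contDiffOn i).continuousOn.neg
      exact ((hw.contDiffOn i).continuousOn.mono hKΩ).div (hφi.mono hKΩ)
        fun y hy => (hφpos i y (hKΩ hy)).ne'
  set t := w i₀ x₀ / φ i₀ x₀
  have ht : 0 < t := (div_pos hpos (hφpos j y (hKΩ hy))).trans_le (hmax j y hy)
  have hle : ∀ i, ∀ y ∈ Ω, w i y ≤ t * φ i y := fun i y hy => by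
    have hz := (hw.add_smul hφ hΩ ht.le).nonpos_of_nonpos_on_compact hM hΩ hΩb hc hK hvol
      (fun i y hy => by
        simpa [← sub_eq_add_neg] using (div_le_iff₀ (hφpos i y (hKΩ hy))).1 (hmax i y hy)) i hy
    simpa [← sub_eq_add_neg] using hz
  exact (hw.lt_mul_of_le_mul_of_strict_supersol hφ hM hΩ hstrict ht hle i₀ (hKΩ hx₀)).ne
    (div_mul_cancel₀ _ (hφpos i₀ x₀ (hKΩ hx₀)).ne').symm

end IsDirichletSubsol

end System

section Monod

variable {n : ℕ} {Ω : Set (EuclideanSpace ℝ (Fin n))} {χ ϑ A d τ : ℝ}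
  {u v u₁ v₁ u₂ v₂ : EuclideanSpace ℝ (Fin n) → ℝ} {x : EuclideanSpace ℝ (Fin n)}

theorem Lap_eq_laplacian (f : EuclideanSpace ℝ (Fin n) → ℝ) : Lap f = Δ f := by
  rw [InnerProductSpace.laplacian_eq_iteratedFDeriv_orthonormalBasis f
    (EuclideanSpace.basisFun (Fin n) ℝ)]
  ext y
  simp [Lap]

namespace IsNonnegMonodSol

theorem laplacian_fst (h : IsNonnegMonodSol Ω χ ϑ A d τ u v) (hd : d ≠ 0) (hx : x ∈ Ω) :
    Δ u x = (χ * u x - ϑ * v x / (A + v x)) / d := by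
  obtain ⟨-, -, -, -, -, -, -, -, heq, -⟩ := h
  rw [eq_div_iff hd, ← Lap_eq_laplacian]
  linarith [heq x hx]

theorem laplacian_snd (h : IsNonnegMonodSol Ω χ ϑ A d τ u v) (hd : d ≠ 0) (hx : x ∈ Ω) :
    Δ v x = (v x - u x) / (τ * d) := by
  obtain ⟨-, -, -, -, -, -, -, -, -, heq⟩ := h
  rw [← div_div, eq_div_iff hd, ← Lap_eq_laplacian]
  linear_combination heq x hx

theorem fst_le_div (h : IsNonnegMonodSol Ω χ ϑ A d τ u v) (hΩ : IsOpen Ω)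
    (hΩb : Bornology.IsBounded Ω) (hχ : 0 < χ) (hϑ : 0 < ϑ) (hA : 0 < A) (hd : 0 < d)
    (hx : x ∈ Ω) : u x ≤ ϑ / χ := by
  obtain ⟨huc, -, hu, -, hufr, -, -, hv0, -, -⟩ := id h
  refine le_of_frontier_le_of_laplacian_nonpos_imp_le hΩ hΩb huc hu
    (fun y hy => (hufr y hy).trans_le (by positivity)) (fun y hy hΔ => ?_) hx
  rw [h.laplacian_fst hd.ne' hy, div_le_iff₀ hd, zero_mul] at hΔ
  have hsat : ϑ * v y / (A + v y) ≤ ϑ := by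
    rw [div_le_iff₀ (by linarith [hv0 y hy])]
    gcongr
    linarith
  rw [le_div_iff₀ hχ]
  linarith

theorem snd_le_of_fst_le (h : IsNonnegMonodSol Ω χ ϑ A d τ u v) (hΩ : IsOpen Ω)
    (hΩb : Bornology.IsBounded Ω) (hd : 0 < d) (hτ : 0 < τ) {B : ℝ} (hB : 0 ≤ B)
    (hu : ∀ y ∈ Ω, u y ≤ B) (hx : x ∈ Ω) : v x ≤ B := by
  obtain ⟨-, hvc, -, hv, -, hvfr, -, -, -, -⟩ := id h
  refine le_of_frontier_le_of_laplacian_nonpos_imp_le hΩ hΩb hvc hv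
    (fun y hy => (hvfr y hy).trans_le hB) (fun y hy hΔ => ?_) hx
  rw [h.laplacian_snd hd.ne' hy, div_le_iff₀ (by positivity), zero_mul] at hΔ
  linarith [hu y hy]

end IsNonnegMonodSol

/-- The coupling matrix of the linear system `Δ w + M w = 0` solved by the difference of two
solutions of the Monod system with second components `v₁` and `v₂`: its nonlinear entry is the
difference quotient of `s ↦ ϑ s / (A + s)` between `v₁` and `v₂`, divided by `d`. -/
noncomputable def monodCoupling (χ ϑ A d τ : ℝ) (v₁ v₂ : EuclideanSpace ℝ (Fin n) → ℝ)
    (x : EuclideanSpace ℝ (Fin n)) : Matrix (Fin 2) (Fin 2) ℝ :=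
  !![-χ / d, ϑ * A / ((A + v₁ x) * (A + v₂ x)) / d; 1 / (τ * d), -1 / (τ * d)]

theorem coupledLaplacian_monodCoupling_zero : coupledLaplacian (monodCoupling χ ϑ A d τ v₁ v₂)
    ![u, v] 0 x = Δ u x + (-χ / d * u x + ϑ * A / ((A + v₁ x) * (A + v₂ x)) / d * v x) := by
  simp [coupledLaplacian, monodCoupling]

theorem coupledLaplacian_monodCoupling_one : coupledLaplacian (monodCoupling χ ϑ A d τ v₁ v₂)
    ![u, v] 1 x = Δ v x + (1 / (τ * d) * u x + -1 / (τ * d) * v x) := by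
  simp [coupledLaplacian, monodCoupling]

theorem isCooperativeOn_monodCoupling (hϑ : 0 < ϑ) (hA : 0 < A) (hd : 0 < d) (hτ : 0 < τ)
    (h₁ : ∀ x ∈ Ω, 0 ≤ v₁ x) (h₂ : ∀ x ∈ Ω, 0 ≤ v₂ x) :
    IsCooperativeOn (monodCoupling χ ϑ A d τ v₁ v₂) Ω
      (|χ| / d + ϑ / A / d + 1 / (τ * d)) where
  nonneg_of_ne x hx := by
    have hv₁ := h₁ x hx
    have hv₂ := h₂ x hx
    have hfst : 0 ≤ monodCoupling χ ϑ A d τ v₁ v₂ x 0 1 := by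
      simp only [monodCoupling, Matrix.of_apply, Matrix.cons_val]
      positivity
    have hsnd : 0 ≤ monodCoupling χ ϑ A d τ v₁ v₂ x 1 0 := by
      simp only [monodCoupling, Matrix.of_apply, Matrix.cons_val]
      positivity
    simp [Fin.forall_fin_two, hfst, hsnd]
  le x hx := by
    have hv₁ := h₁ x hx
    have hv₂ := h₂ x hx
    have hχ : -χ / d ≤ |χ| / d := by gcongr; exact neg_le_abs χ
    have hsecant : ϑ * A / ((A + v₁ x) * (A + v₂ x)) / d ≤ ϑ / A / d := by
      rw [← mul_div_mul_right ϑ A hA.ne']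
      gcongr <;> linarith
    have hτd : -1 / (τ * d) ≤ 1 / (τ * d) := by gcongr; norm_num
    have hχ₀ : 0 ≤ |χ| / d := by positivity
    have hϑ₀ : 0 ≤ ϑ / A / d := by positivity
    have hτ₀ : 0 ≤ 1 / (τ * d) := by positivity
    simp only [Fin.forall_fin_two, monodCoupling, Matrix.of_apply, Matrix.cons_val]
    refine ⟨⟨?_, ?_⟩, ?_, ?_⟩ <;> linarith

theorem IsNonnegMonodSol.isDirichletSubsol_sub (h₁ : IsNonnegMonodSol Ω χ ϑ A d τ u₁ v₁)
    (h₂ : IsNonnegMonodSol Ω χ ϑ A d τ u₂ v₂) (hΩ : IsOpen Ω) (hA : 0 < A) (hd : d ≠ 0) :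
    IsDirichletSubsol (monodCoupling χ ϑ A d τ v₁ v₂) Ω ![u₂ - u₁, v₂ - v₁] := by
  obtain ⟨huc₁, hvc₁, hu₁, hv₁, hufr₁, hvfr₁, -, hv0₁, -⟩ := id h₁
  obtain ⟨huc₂, hvc₂, hu₂, hv₂, hufr₂, hvfr₂, -, hv0₂, -⟩ := id h₂
  refine ⟨Fin.forall_fin_two.2 ⟨huc₂.sub huc₁, hvc₂.sub hvc₁⟩,
    Fin.forall_fin_two.2 ⟨hu₂.sub hu₁, hv₂.sub hv₁⟩,
    Fin.forall_fin_two.2 ⟨fun x hx => ?_, fun x hx => ?_⟩,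
    Fin.forall_fin_two.2 ⟨fun x hx => ?_, fun x hx => ?_⟩⟩
  · simp [hufr₁ x hx, hufr₂ x hx]
  · simp [hvfr₁ x hx, hvfr₂ x hx]
  · have hA₁ : A + v₁ x ≠ 0 := by linarith [hv0₁ x hx]
    have hA₂ : A + v₂ x ≠ 0 := by linarith [hv0₂ x hx]
    have hmem := hΩ.mem_nhds hx
    rw [coupledLaplacian_monodCoupling_zero,
      (hu₂.contDiffAt hmem).laplacian_sub (hu₁.contDiffAt hmem),
      h₁.laplacian_fst hd hx, h₂.laplacian_fst hd hx, Pi.sub_apply, Pi.sub_apply]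
    refine Eq.ge ?_
    field_simp
    ring
  · have hmem := hΩ.mem_nhds hx
    rw [coupledLaplacian_monodCoupling_one,
      (hv₂.contDiffAt hmem).laplacian_sub (hv₁.contDiffAt hmem),
      h₁.laplacian_snd hd hx, h₂.laplacian_snd hd hx, Pi.sub_apply, Pi.sub_apply]
    exact Eq.ge (by ring)

-- The sign of the right-hand side is the sublinearity of `s ↦ ϑ s / (A + s)`.
theorem IsNonnegMonodSol.coupledLaplacian_monodCoupling_fst (h : IsNonnegMonodSol Ω χ ϑ A d τ u₁ v₁)
    (hA : 0 < A) (hd : d ≠ 0) (hx : x ∈ Ω) (hv : 0 ≤ v₂ x) :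
    coupledLaplacian (monodCoupling χ ϑ A d τ v₁ v₂) ![u₁, v₁] 0 x =
      -(ϑ / d * (v₁ x * v₂ x) / ((A + v₁ x) * (A + v₂ x))) := by
  obtain ⟨-, -, -, -, -, -, -, hv0, -⟩ := id h
  have hA₁ : A + v₁ x ≠ 0 := by linarith [hv0 x hx]
  have hA₂ : A + v₂ x ≠ 0 := by linarith
  rw [coupledLaplacian_monodCoupling_zero, h.laplacian_fst hd hx]
  field_simp
  ring

theorem IsNonnegMonodSol.coupledLaplacian_monodCoupling_snd (h : IsNonnegMonodSol Ω χ ϑ A d τ u₁ v₁)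
    (hd : d ≠ 0) (hx : x ∈ Ω) :
    coupledLaplacian (monodCoupling χ ϑ A d τ v₁ v₂) ![u₁, v₁] 1 x = 0 := by
  rw [coupledLaplacian_monodCoupling_one, h.laplacian_snd hd hx]
  ring

theorem IsNonnegMonodSol.isDirichletSubsol_neg (h : IsNonnegMonodSol Ω χ ϑ A d τ u₁ v₁)
    (hϑ : 0 ≤ ϑ) (hA : 0 < A) (hd : 0 < d) (hv : ∀ x ∈ Ω, 0 ≤ v₂ x) :
    IsDirichletSubsol (monodCoupling χ ϑ A d τ v₁ v₂) Ω (-![u₁, v₁]) := by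
  obtain ⟨huc, hvc, hu, hv₁, hufr, hvfr, -, hv0, -⟩ := id h
  refine ⟨Fin.forall_fin_two.2 ⟨huc.neg, hvc.neg⟩, Fin.forall_fin_two.2 ⟨hu.neg, hv₁.neg⟩,
    Fin.forall_fin_two.2 ⟨fun x hx => ?_, fun x hx => ?_⟩,
    Fin.forall_fin_two.2 ⟨fun x hx => ?_, fun x hx => ?_⟩⟩
  · simp [hufr x hx]
  · simp [hvfr x hx]
  · have hv₁x := hv0 x hx
    have hv₂x := hv x hx
    rw [coupledLaplacian_neg, h.coupledLaplacian_monodCoupling_fst hA hd.ne' hx hv₂x, neg_neg]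
    positivity
  · rw [coupledLaplacian_neg, h.coupledLaplacian_monodCoupling_snd hd.ne' hx, neg_zero]

theorem IsPosMonodSol.le (h₁ : IsPosMonodSol Ω χ ϑ A d τ u₁ v₁)
    (h₂ : IsPosMonodSol Ω χ ϑ A d τ u₂ v₂) (hΩ : IsOpen Ω) (hΩb : Bornology.IsBounded Ω)
    (hϑ : 0 < ϑ) (hA : 0 < A) (hd : 0 < d) (hτ : 0 < τ) (hx : x ∈ Ω) :
    u₂ x ≤ u₁ x ∧ v₂ x ≤ v₁ x := by
  obtain ⟨hsol₁, hu₁, hv₁⟩ := h₁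
  obtain ⟨hsol₂, -, hv₂⟩ := h₂
  have hstrict : ∀ y ∈ Ω, ∀ i, ∃ j, (i = j ∨ 0 < monodCoupling χ ϑ A d τ v₁ v₂ y i j) ∧
      coupledLaplacian (monodCoupling χ ϑ A d τ v₁ v₂) ![u₁, v₁] j y < 0 := by
    intro y hy i
    have hv₁y := hv₁ y hy
    have hv₂y := hv₂ y hy
    refine ⟨0, ?_, ?_⟩
    · have hentry : 0 < monodCoupling χ ϑ A d τ v₁ v₂ y 1 0 := by
        simp only [monodCoupling, Matrix.of_apply, Matrix.cons_val]
        positivity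
      revert i
      exact Fin.forall_fin_two.2 ⟨.inl rfl, .inr hentry⟩
    · rw [hsol₁.coupledLaplacian_monodCoupling_fst hA hd.ne' hy hv₂y.le, neg_lt_zero]
      positivity
  have hle := fun i =>
    (hsol₁.isDirichletSubsol_sub hsol₂ hΩ hA hd.ne').nonpos_of_pos_strict_supersol
    (hsol₁.isDirichletSubsol_neg hϑ.le hA hd fun y hy => (hv₂ y hy).le)
    (isCooperativeOn_monodCoupling hϑ hA hd hτ (fun y hy => (hv₁ y hy).le)
      fun y hy => (hv₂ y hy).le) hΩ hΩb (by positivity)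
    (Fin.forall_fin_two.2 ⟨hu₁, hv₁⟩) hstrict i hx
  exact ⟨sub_nonpos.1 (hle 0), sub_nonpos.1 (hle 1)⟩

end Monod

/-- for the Monod-type steady state system on a bounded open set,
(i) any nonnegative classical solution satisfies 0 ≤ u, v ≤ ϑ/χ in Ω, and
(ii) there is at most one positive classical solution. -/
theorem stmt18 {n : ℕ} (Ω : Set (EuclideanSpace ℝ (Fin n)))
    (hΩo : IsOpen Ω) (hΩb : Bornology.IsBounded Ω)
    (χ ϑ A d τ : ℝ) (hχ : 0 < χ) (hϑ : 0 < ϑ) (hA : 0 < A) (hd : 0 < d) (hτ : 0 < τ) :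
    -- (i)
    (∀ u v : EuclideanSpace ℝ (Fin n) → ℝ, IsNonnegMonodSol Ω χ ϑ A d τ u v →
      ∀ x ∈ Ω, 0 ≤ u x ∧ u x ≤ ϑ / χ ∧ 0 ≤ v x ∧ v x ≤ ϑ / χ) ∧
    -- (ii)
    (∀ u₁ v₁ u₂ v₂ : EuclideanSpace ℝ (Fin n) → ℝ,
      IsPosMonodSol Ω χ ϑ A d τ u₁ v₁ → IsPosMonodSol Ω χ ϑ A d τ u₂ v₂ →
      EqOn u₁ u₂ Ω ∧ EqOn v₁ v₂ Ω) := by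
  refine ⟨fun u v h x hx => ?_, fun u₁ v₁ u₂ v₂ h₁ h₂ => ?_⟩
  · have hu : ∀ y ∈ Ω, u y ≤ ϑ / χ := fun y hy => h.fst_le_div hΩo hΩb hχ hϑ hA hd hy
    have hv : v x ≤ ϑ / χ := h.snd_le_of_fst_le hΩo hΩb hd hτ (by positivity) hu hx
    obtain ⟨-, -, -, -, -, -, hu₀, hv₀, -⟩ := h
    exact ⟨hu₀ x hx, hu x hx, hv₀ x hx, hv⟩
  · have hle₂₁ := fun x hx => h₁.le h₂ hΩo hΩb hϑ hA hd hτ (x := x) hx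
    have hle₁₂ := fun x hx => h₂.le h₁ hΩo hΩb hϑ hA hd hτ (x := x) hx
    exact ⟨fun x hx => (hle₁₂ x hx).1.antisymm (hle₂₁ x hx).1,
      fun x hx => (hle₁₂ x hx).2.antisymm (hle₂₁ x hx).2⟩
end
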